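/- arXiv:2411.00079 — 4 statements merged into one kernel-verified Lean document; each statement's English description precedes it below -/
import Mathlib

section
/- (Excess risk upper bound for noise-ignorant ERM.) Let ε ∈ [0,1] and κ > 0. Let (P_X, η, η̃) be a triple with P_X(A_κ(η, η̃)) ≥ 1 − ε, let F be a class of measurable classifiers f : 𝒳 → {1,…,K} with Natarajan dimension V, and suppose the noisy Bayes classifier f̃* belongs to F. Let Z^n = ((X_1, Ỹ_1),…,(X_n, Ỹ_n)) be an i.i.d. sample from P_{XỸ} and let f̂ ∈ argmin_{f ∈ F} (1/n) Σ_{i=1}^n 1{f(X_i) ≠ Ỹ_i} be an empirical risk minimizer. Then, assuming all maps involved are measurable, E_{Z^n}[ R(f̂) − R(f*) ] ≤ ε + (1/κ)·16·√( (V·log n + 2V·log K + 4) / (2n) ). -/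
open MeasureTheory ENNReal

noncomputable section

/-- The probability simplex `Δ^K`. -/
def simplex (K : ℕ) : Set (Fin K → ℝ) :=
  {p | (∀ i, 0 ≤ p i) ∧ ∑ i, p i = 1}

/-- Relative signal strength `M(x; η, η̃)`, where any ratio with zero denominator
(including `0/0`) is taken to be `+∞`. -/
def RSS {K : ℕ} (η ηt : Fin K → ℝ) : ℝ≥0∞ :=
  ⨅ j : Fin K,
    if (⨆ i, η i) - η j = 0 then ⊤
    else ENNReal.ofReal (((⨆ i, ηt i) - ηt j) / ((⨆ i, η i) - η j))

/-- `A_κ`, the region where the relative signal strength exceeds `κ`. -/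
def signalRegion {X : Type*} {K : ℕ} (η ηt : X → Fin K → ℝ) (κ : ℝ) : Set X :=
  {x | ENNReal.ofReal κ < RSS (η x) (ηt x)}

/-- The risk `R(f) = ∫ (1 - [η(x)]_{f(x)}) dP_X(x)` of a classifier `f`. -/
def risk {X : Type*} [MeasurableSpace X] {K : ℕ} (P : Measure X)
    (η : X → Fin K → ℝ) (f : X → Fin K) : ℝ :=
  ∫ x, (1 - η x (f x)) ∂P

/-- The Bayes risk `R(f^*) = ∫ (1 - max_i [η(x)]_i) dP_X(x)`. -/
def bayesRisk {X : Type*} [MeasurableSpace X] {K : ℕ} (P : Measure X)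
    (η : X → Fin K → ℝ) : ℝ :=
  ∫ x, (1 - ⨆ i, η x i) ∂P

/-- The noisy joint distribution `P_{XỸ}` on `𝒳 × {1,…,K}`, determined by
`P_{XỸ}(A × {j}) = ∫_A [η̃(x)]_j dP_X(x)`. -/
def jointMeasure {X : Type*} [MeasurableSpace X] {K : ℕ} (P : Measure X)
    (ηt : X → Fin K → ℝ) : Measure (X × Fin K) :=
  ∑ j : Fin K, ((P.withDensity fun x => ENNReal.ofReal (ηt x j)).map fun x => (x, j))


/-- The set of indices attaining the maximum of `v`. -/
def argmaxSet {K : ℕ} (v : Fin K → ℝ) : Set (Fin K) :=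
  {i | v i = ⨆ j, v j}

/-- A finite set `C` is (Natarajan-)shattered by `F` if there are `g, h` disagreeing
everywhere on `C` such that every `{g,h}`-valued pattern on `C` is realized by some
member of `F`. -/
def NShatters {X : Type*} {K : ℕ} (F : Set (X → Fin K)) (C : Finset X) : Prop :=
  ∃ g h : X → Fin K, (∀ x ∈ C, g x ≠ h x) ∧
    ∀ v : X → Fin K, (∀ x ∈ C, v x = g x ∨ v x = h x) →
      ∃ f ∈ F, ∀ x ∈ C, f x = v x


lemma natarajan_bound {K : ℕ} (hK : 1 ≤ K) (m : ℕ) : ∀ (d : ℕ) (H : Finset (Fin m → Fin K)),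
    (∀ C : Finset (Fin m), NShatters (H : Set (Fin m → Fin K)) C → C.card ≤ d) →
    H.card ≤ (m + 1) ^ d * K ^ (2 * d) := by
  classical
  induction m with
  | zero =>
    intro d H _
    calc H.card ≤ 1 := Finset.card_le_one_of_subsingleton H
      _ ≤ _ := Nat.one_le_iff_ne_zero.mpr (by positivity)
  | succ m ih =>
    intro d H hH
    set H' : Finset (Fin m → Fin K) := H.image Fin.tail with hH'
    set Hab : Fin K × Fin K → Finset (Fin m → Fin K) := fun p =>
      H'.filter (fun g => (Fin.cons p.1 g : Fin (m+1) → Fin K) ∈ H ∧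
        (Fin.cons p.2 g : Fin (m+1) → Fin K) ∈ H) with hHab
    have h1 : ∀ C : Finset (Fin m), NShatters (H' : Set (Fin m → Fin K)) C → C.card ≤ d := by
      rintro C ⟨g, h, hgh, hv⟩
      have hN : NShatters (H : Set (Fin (m+1) → Fin K)) (C.map (Fin.succEmb m)) := by
        refine ⟨fun i => Fin.cases ⟨0, hK⟩ g i, fun i => Fin.cases ⟨0, hK⟩ h i, ?_, ?_⟩
        · intro x hx
          obtain ⟨y, hy, rfl⟩ := Finset.mem_map.mp hx
          simpa using hgh y hy
        · intro v hv'
          obtain ⟨f, hf, hfv⟩ := hv (fun i => v i.succ) (by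
            intro x hx
            simpa using hv' x.succ (Finset.mem_map.mpr ⟨x, hx, rfl⟩))
          obtain ⟨f', hf', rfl⟩ := Finset.mem_image.mp (Finset.mem_coe.mp hf)
          refine ⟨f', hf', ?_⟩
          intro x hx
          obtain ⟨y, hy, rfl⟩ := Finset.mem_map.mp hx
          exact hfv y hy
      have := hH _ hN
      simpa using this
    have h2 : ∀ p : Fin K × Fin K, p.1 ≠ p.2 →
        ∀ C : Finset (Fin m), NShatters (Hab p : Set (Fin m → Fin K)) C → C.card + 1 ≤ d := by
      rintro p hp C ⟨g, h, hgh, hv⟩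
      have hN : NShatters (H : Set (Fin (m+1) → Fin K))
          (insert 0 (C.map (Fin.succEmb m))) := by
        refine ⟨fun i => Fin.cases p.1 g i, fun i => Fin.cases p.2 h i, ?_, ?_⟩
        · intro x hx
          rcases Finset.mem_insert.mp hx with rfl | hx
          · simpa using hp
          · obtain ⟨y, hy, rfl⟩ := Finset.mem_map.mp hx
            simpa using hgh y hy
        · intro v hv'
          obtain ⟨f, hf, hfv⟩ := hv (fun i => v i.succ) (by
            intro x hx
            simpa using hv' x.succ (Finset.mem_insert_of_mem (Finset.mem_map.mpr ⟨x, hx, rfl⟩)))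
          have hf2 := (Finset.mem_filter.mp (Finset.mem_coe.mp hf)).2
          have h0 := hv' 0 (Finset.mem_insert_self _ _)
          refine ⟨Fin.cons (v 0) f, ?_, ?_⟩
          · rcases h0 with h0 | h0
            · rw [h0]; exact hf2.1
            · rw [h0]; exact hf2.2
          · intro x hx
            rcases Finset.mem_insert.mp hx with rfl | hx
            · simp
            · obtain ⟨y, hy, rfl⟩ := Finset.mem_map.mp hx
              simpa using hfv y hy
      have := hH _ hN
      rw [Finset.card_insert_of_notMem (by
        simp)] at this
      simpa using this
    have h3 : H.card ≤ H'.card + ∑ p ∈ (Finset.univ : Finset (Fin K)).offDiag, (Hab p).card := by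
      have e1 : H.card = ∑ g ∈ H', (H.filter (fun f => Fin.tail f = g)).card :=
        Finset.card_eq_sum_card_image _ _
      have e2 : ∀ g, (H.filter (fun f => Fin.tail f = g)).card ≤
          (Finset.univ.filter (fun a : Fin K => (Fin.cons a g : Fin (m+1) → Fin K) ∈ H)).card := by
        intro g
        apply Finset.card_le_card_of_injOn (fun f => f 0)
        · intro f hf
          have hf := Finset.mem_filter.mp (Finset.mem_coe.mp hf)
          simp only [Finset.coe_filter, Finset.mem_univ, true_and, Set.mem_ofPred_eq]
          rw [← hf.2, Fin.cons_self_tail]; exact hf.1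
        · intro f hf f' hf' hff
          have hf := (Finset.mem_filter.mp (Finset.mem_coe.mp hf)).2
          have hf' := (Finset.mem_filter.mp (Finset.mem_coe.mp hf')).2
          rw [← Fin.cons_self_tail f, ← Fin.cons_self_tail f', hf, hf']
          simp only at hff
          rw [hff]
      have e3 : ∀ s : Finset (Fin K), s.card ≤ 1 + s.offDiag.card := by
        intro s
        rw [Finset.offDiag_card]
        rcases Nat.lt_or_ge s.card 2 with h | h
        · omega
        · have : 2 * s.card ≤ s.card * s.card := Nat.mul_le_mul_right _ h
          omega
      have e4 : ∑ p ∈ (Finset.univ : Finset (Fin K)).offDiag, (Hab p).card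
          = ∑ g ∈ H', ((Finset.univ.filter
            (fun a : Fin K => (Fin.cons a g : Fin (m+1) → Fin K) ∈ H)).offDiag).card := by
        simp only [hHab, Finset.card_filter]
        rw [Finset.sum_comm]
        refine Finset.sum_congr rfl fun g _ => ?_
        rw [← Finset.card_filter]
        congr 1
        ext p
        simp only [Finset.mem_filter, Finset.mem_offDiag, Finset.mem_univ, true_and]
        tauto
      rw [e1, e4, Finset.card_eq_sum_ones, ← Finset.sum_add_distrib]
      exact Finset.sum_le_sum fun g _ => (e2 g).trans (e3 _)
    have h4 := ih d H' h1
    cases d with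
    | zero =>
      have h5 : ∑ p ∈ (Finset.univ : Finset (Fin K)).offDiag, (Hab p).card = 0 := by
        refine Finset.sum_eq_zero fun p hp => ?_
        by_contra hne
        obtain ⟨f, hf⟩ := Finset.card_ne_zero.mp hne
        have := h2 p (Finset.mem_offDiag.mp hp).2.2 ∅
          ⟨f, f, by simp, fun v _ => ⟨f, hf, by simp⟩⟩
        omega
      simp at h4 ⊢
      omega
    | succ d =>
      have h5 : ∑ p ∈ (Finset.univ : Finset (Fin K)).offDiag, (Hab p).card ≤
          (K * K) * ((m + 1) ^ d * K ^ (2 * d)) := by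
        calc _ ≤ ∑ p ∈ (Finset.univ : Finset (Fin K)).offDiag, ((m + 1) ^ d * K ^ (2 * d)) := by
              refine Finset.sum_le_sum fun p hp => ih d _ fun C hC => ?_
              have := h2 p (Finset.mem_offDiag.mp hp).2.2 C hC
              omega
          _ ≤ _ := by
              rw [Finset.sum_const, smul_eq_mul]
              apply Nat.mul_le_mul_right
              rw [Finset.offDiag_card]; simp
      calc H.card ≤ (m + 1) ^ (d+1) * K ^ (2 * (d+1)) + (K * K) * ((m + 1) ^ d * K ^ (2 * d)) := by
            omega
        _ = (m + 1) ^ d * ((m + 2) * K ^ (2 * (d+1))) := by ring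
        _ ≤ (m + 2) ^ d * ((m + 2) * K ^ (2 * (d+1))) := by gcongr; omega
        _ = _ := by ring

lemma pattern_bound {X : Type*} {K : ℕ} (hK : 1 ≤ K) (F : Set (X → Fin K)) (V : ℕ)
    (hdim : ∀ C : Finset X, NShatters F C → C.card ≤ V) (m : ℕ) (x : Fin m → X)
    (H : Finset (Fin m → Fin K)) (hH : ∀ u ∈ H, ∃ f ∈ F, ∀ i, u i = f (x i)) :
    H.card ≤ (m + 1) ^ V * K ^ (2 * V) := by
  classical
  apply natarajan_bound hK
  rintro C ⟨g, h, hgh, hv⟩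
  have hinj : Set.InjOn x C := by
    intro i hi j hj hij
    by_contra hne
    obtain ⟨c, hc, hc'⟩ : ∃ c, (c = g j ∨ c = h j) ∧ c ≠ g i := by
      by_cases hg : g j = g i
      · exact ⟨h j, Or.inr rfl, fun h' => hgh j hj (hg.trans h'.symm)⟩
      · exact ⟨g j, Or.inl rfl, hg⟩
    obtain ⟨f, hf, hfv⟩ := hv (Function.update g j c) (by
      intro k hk
      by_cases hkj : k = j
      · subst hkj; simpa using hc
      · simp [hkj])
    obtain ⟨f', _, hf'⟩ := hH f hf
    have e1 := hfv i hi
    have e2 := hfv j hj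
    rw [hf', Function.update_of_ne hne] at e1
    rw [hf', Function.update_self, ← hij, e1] at e2
    exact hc' e2.symm
  rw [← Finset.card_image_of_injOn hinj]
  apply hdim
  rcases C.eq_empty_or_nonempty with rfl | ⟨i0, hi0⟩
  · obtain ⟨f, hf, _⟩ := hv g (by simp)
    obtain ⟨f', hf', _⟩ := hH f hf
    exact ⟨f', f', by simp, fun v _ => ⟨f', hf', by simp⟩⟩
  · have : Nonempty (Fin m) := ⟨i0⟩
    have hinv : ∀ i ∈ C, Function.invFunOn x C (x i) = i := fun i hi =>
      hinj.leftInvOn_invFunOn hi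
    refine ⟨fun y => g (Function.invFunOn x C y), fun y => h (Function.invFunOn x C y), ?_, ?_⟩
    · intro y hy
      obtain ⟨i, hi, rfl⟩ := Finset.mem_image.mp hy
      simpa only [hinv i hi] using hgh i hi
    · intro v hv'
      obtain ⟨f, hf, hfv⟩ := hv (fun i => v (x i)) (by
        intro i hi
        have := hv' (x i) (Finset.mem_image_of_mem x hi)
        simpa only [hinv i hi] using this)
      obtain ⟨f', hF, hf'⟩ := hH f hf
      refine ⟨f', hF, ?_⟩
      intro y hy
      obtain ⟨i, hi, rfl⟩ := Finset.mem_image.mp hy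
      rw [← hf', hfv i hi]

/-- Massart finite class lemma with a selection rule. -/
lemma massart {n : ℕ} (D : Finset (Fin n → ℝ)) (hD : ∀ d ∈ D, ∀ i, |d i| ≤ 1)
    (sel : (Fin n → Bool) → Fin n → ℝ) (hsel : ∀ σ, sel σ ∈ D) (lam L : ℝ) (hlam : 0 < lam)
    (hL : (D.card : ℝ) ≤ Real.exp L) :
    (∑ σ : Fin n → Bool, (1 / 2 ^ n : ℝ) * ∑ i, (if σ i then -1 else 1) * sel σ i) ≤
      L / lam + n * lam / 2 := by
  set A := ∑ σ : Fin n → Bool, (1 / 2 ^ n : ℝ) * ∑ i, (if σ i then -1 else 1) * sel σ i with hA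
  have hw : ∑ _σ : Fin n → Bool, (1 / 2 ^ n : ℝ) = 1 := by
    simp
  have hj : Real.exp (lam * A) ≤ ∑ σ : Fin n → Bool, (1 / 2 ^ n : ℝ) *
      Real.exp (lam * ∑ i, (if σ i then -1 else 1) * sel σ i) := by
    have := convexOn_exp.map_sum_le (t := (Finset.univ : Finset (Fin n → Bool)))
      (w := fun _ => (1 / 2 ^ n : ℝ))
      (p := fun σ => lam * ∑ i, (if σ i then -1 else 1) * sel σ i)
      (fun _ _ => by positivity) hw (fun _ _ => Set.mem_univ _)
    simp only [smul_eq_mul] at this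
    have e : lam * A = ∑ σ : Fin n → Bool, (1 / 2 ^ n : ℝ) *
        (lam * ∑ i, (if σ i then -1 else 1) * sel σ i) := by
      rw [hA, Finset.mul_sum]
      exact Finset.sum_congr rfl fun σ _ => by ring
    rw [e]
    exact this
  have hprod : ∀ d ∈ D, ∑ σ : Fin n → Bool, (1 / 2 ^ n : ℝ) *
      Real.exp (lam * ∑ i, (if σ i then -1 else 1) * d i) ≤ Real.exp (n * lam ^ 2 / 2) := by
    intro d hd
    have e : ∀ σ : Fin n → Bool, (1 / 2 ^ n : ℝ) *
        Real.exp (lam * ∑ i, (if σ i then -1 else 1) * d i) =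
        ∏ i, (1 / 2 : ℝ) * Real.exp (lam * ((if σ i then -1 else 1) * d i)) := by
      intro σ
      rw [Finset.prod_mul_distrib, ← Real.exp_sum, Finset.mul_sum]
      simp
    simp_rw [e]
    rw [← Fintype.prod_sum (fun (i : Fin n) (b : Bool) =>
      (1 / 2 : ℝ) * Real.exp (lam * ((if b then -1 else 1) * d i)))]
    have : ∀ i, ∑ b : Bool, (1 / 2 : ℝ) * Real.exp (lam * ((if b then -1 else 1) * d i)) ≤
        Real.exp (lam ^ 2 / 2) := by
      intro i
      have h1 : ∑ b : Bool, (1 / 2 : ℝ) * Real.exp (lam * ((if b then -1 else 1) * d i))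
          = Real.cosh (lam * d i) := by
        rw [Real.cosh_eq]; simp; ring
      rw [h1]
      refine (Real.cosh_le_exp_half_sq _).trans ?_
      apply Real.exp_le_exp.mpr
      have := sq_le_one_iff_abs_le_one (d i) |>.mpr (hD d hd i)
      have h2 : lam ^ 2 * (d i) ^ 2 ≤ lam ^ 2 * 1 := by gcongr
      rw [mul_pow]; linarith
    calc _ ≤ ∏ _i : Fin n, Real.exp (lam ^ 2 / 2) :=
          Finset.prod_le_prod (fun i _ => by positivity) (fun i _ => this i)
      _ = _ := by
          rw [← Real.exp_sum]; simp; ring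
  have hmain : Real.exp (lam * A) ≤ Real.exp (L + n * lam ^ 2 / 2) := by
    calc _ ≤ _ := hj
      _ ≤ ∑ σ : Fin n → Bool, ∑ d ∈ D, (1 / 2 ^ n : ℝ) *
          Real.exp (lam * ∑ i, (if σ i then -1 else 1) * d i) := by
          refine Finset.sum_le_sum fun σ _ => ?_
          exact Finset.single_le_sum (f := fun d : Fin n → ℝ => (1 / 2 ^ n : ℝ) *
            Real.exp (lam * ∑ i, (if σ i then -1 else 1) * d i))
            (fun d _ => by positivity) (hsel σ)
      _ = ∑ d ∈ D, ∑ σ : Fin n → Bool, (1 / 2 ^ n : ℝ) *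
          Real.exp (lam * ∑ i, (if σ i then -1 else 1) * d i) := Finset.sum_comm
      _ ≤ ∑ d ∈ D, Real.exp (n * lam ^ 2 / 2) := Finset.sum_le_sum hprod
      _ = D.card * Real.exp (n * lam ^ 2 / 2) := by simp
      _ ≤ Real.exp L * Real.exp (n * lam ^ 2 / 2) := by gcongr
      _ = _ := by rw [Real.exp_add]
  have h := Real.exp_le_exp.mp hmain
  have : A ≤ (L + n * lam ^ 2 / 2) / lam := by
    rw [le_div_iff₀ hlam]; linarith
  refine this.trans (le_of_eq ?_)
  field_simp

/-- The zero-one loss. -/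
def zloss {X : Type*} {K : ℕ} (f : X → Fin K) (s : X × Fin K) : ℝ :=
  if f s.1 ≠ s.2 then 1 else 0

lemma zloss_nonneg {X : Type*} {K : ℕ} (f : X → Fin K) (s : X × Fin K) : 0 ≤ zloss f s := by
  unfold zloss; split_ifs <;> norm_num

lemma zloss_le_one {X : Type*} {K : ℕ} (f : X → Fin K) (s : X × Fin K) : zloss f s ≤ 1 := by
  unfold zloss; split_ifs <;> norm_num

lemma core_bound {X : Type*} {K : ℕ} (hK : 2 ≤ K) (F : Set (X → Fin K)) (V n : ℕ) (hn : 1 ≤ n)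
    (hdim : ∀ C : Finset X, NShatters F C → C.card ≤ V)
    (w : Fin n → (X × Fin K) × (X × Fin K)) (sel : (Fin n → Bool) → X → Fin K)
    (hsel : ∀ σ, sel σ ∈ F) :
    (∑ σ : Fin n → Bool, (1 / 2 ^ n : ℝ) * ∑ i, (if σ i then -1 else 1) *
      (zloss (sel σ) (w i).2 - zloss (sel σ) (w i).1)) ≤
    n * (3 * Real.sqrt ((V * Real.log n + 2 * V * Real.log K + 4) / (2 * n))) := by
  classical
  have hn0 : (0 : ℝ) < n := by exact_mod_cast hn
  have hlogn : 0 ≤ Real.log n := Real.log_nonneg (by exact_mod_cast hn)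
  have hK2 : (2 : ℝ) ≤ K := by exact_mod_cast hK
  have hlogK : 0 ≤ Real.log K := Real.log_nonneg (by linarith)
  set Q : ℝ := V * Real.log n + 2 * V * Real.log K + 4 with hQ
  have hQ0 : 0 < Q := by positivity
  set s := Real.sqrt (Q / (2 * n)) with hs
  have hs0 : 0 < s := Real.sqrt_pos.mpr (by positivity)
  have hss : s ^ 2 = Q / (2 * n) := Real.sq_sqrt (by positivity)
  have hL : 2 * Q = 4 * n * s ^ 2 := by rw [hss]; field_simp; norm_num
  let x : Fin (n + n) → X := Fin.append (fun i => (w i).1.1) (fun i => (w i).2.1)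
  let H : Finset (Fin (n + n) → Fin K) :=
    Finset.univ.filter (fun u => ∃ f ∈ F, ∀ i, u i = f (x i))
  let T : (Fin (n + n) → Fin K) → Fin n → ℝ := fun u i =>
    (if u (Fin.natAdd n i) ≠ (w i).2.2 then (1 : ℝ) else 0) -
      (if u (Fin.castAdd n i) ≠ (w i).1.2 then (1 : ℝ) else 0)
  have hcard : ((H.image T).card : ℝ) ≤ Real.exp (2 * Q) := by
    have h1 : (H.image T).card ≤ (n + n + 1) ^ V * K ^ (2 * V) :=
      Finset.card_image_le.trans (pattern_bound (by omega) F V hdim (n + n) x H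
        (fun u hu => (Finset.mem_filter.mp hu).2))
    have h2 : ((H.image T).card : ℝ) ≤ ((n : ℝ) + n + 1) ^ V * (K : ℝ) ^ (2 * V) := by
      exact_mod_cast h1
    have hn1 : (1 : ℝ) ≤ n := by exact_mod_cast hn
    have h3 : ((n : ℝ) + n + 1) ≤ n * (K : ℝ) ^ 2 := by
      have h4 : (4 : ℝ) ≤ (K : ℝ) ^ 2 := by nlinarith
      have h5 : (n : ℝ) * 4 ≤ n * (K : ℝ) ^ 2 := by gcongr
      linarith
    calc ((H.image T).card : ℝ) ≤ ((n : ℝ) + n + 1) ^ V * (K : ℝ) ^ (2 * V) := h2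
      _ ≤ (n * (K : ℝ) ^ 2) ^ V * (K : ℝ) ^ (2 * V) := by gcongr
      _ = Real.exp (V * (Real.log n + 2 * Real.log K) + (2 * V) * Real.log K) := by
          have e1 : Real.exp (Real.log n) = n := Real.exp_log hn0
          have e2 : Real.exp (Real.log K) = K := Real.exp_log (by linarith)
          rw [Real.exp_add, Real.exp_nat_mul, Real.exp_add]
          rw [show (2 : ℝ) * Real.log K = ((2 : ℕ) : ℝ) * Real.log K by norm_num,
            Real.exp_nat_mul, e1, e2,
            show (2 : ℝ) * (V : ℝ) * Real.log K = ((2 * V : ℕ) : ℝ) * Real.log K by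
              push_cast; ring, Real.exp_nat_mul, e2]
      _ ≤ Real.exp (2 * Q) := by
          apply Real.exp_le_exp.mpr
          rw [hQ]
          have : 0 ≤ (V : ℝ) * Real.log n := by positivity
          nlinarith
  have := massart (H.image T) (by
      intro d hd i
      obtain ⟨u, _, rfl⟩ := Finset.mem_image.mp hd
      simp only [T]
      split_ifs <;> norm_num)
    (fun σ => T (fun j => sel σ (x j)))
    (fun σ => Finset.mem_image_of_mem _ (Finset.mem_filter.mpr
      ⟨Finset.mem_univ _, sel σ, hsel σ, fun i => rfl⟩)) (2 * s) (2 * Q) (by positivity) hcard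
  have e : ∀ σ i, T (fun j => sel σ (x j)) i =
      zloss (sel σ) (w i).2 - zloss (sel σ) (w i).1 := by
    intro σ i
    simp only [T, x, Fin.append_left, Fin.append_right, zloss]
  simp only [e] at this
  refine this.trans (le_of_eq ?_)
  rw [hL]; field_simp; norm_num

lemma symmetrization {S : Type*} [MeasurableSpace S] (μ : Measure S) [IsProbabilityMeasure μ]
    {n : ℕ} (g : (Fin n → S) → S → ℝ) (hg : Measurable fun p : (Fin n → S) × S => g p.1 p.2)
    (h0 : ∀ z s, 0 ≤ g z s) (h1 : ∀ z s, g z s ≤ 1) (B : ℝ)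
    (hB : ∀ w : Fin n → S × S, (∑ σ : Fin n → Bool, (1 / 2 ^ n : ℝ) * ∑ i, (if σ i then -1 else 1) *
      (g (fun j => if σ j then (w j).2 else (w j).1) (w i).2 -
        g (fun j => if σ j then (w j).2 else (w j).1) (w i).1)) ≤ B) :
    ∫ p, (∑ i, (g p.1 (p.2 i) - g p.1 (p.1 i)))
      ∂((Measure.pi fun _ : Fin n => μ).prod (Measure.pi fun _ : Fin n => μ)) ≤ B := by
  set ν := Measure.pi fun _ : Fin n => μ.prod μ with hν
  have hmp := measurePreserving_arrowProdEquivProdArrow S S (Fin n) (fun _ => μ) (fun _ => μ)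
  rw [← hmp.integral_comp (MeasurableEquiv.measurableEmbedding _)]
  set Φ : (Fin n → S × S) → ℝ := fun w =>
    ∑ i, (g (fun j => (w j).1) (w i).2 - g (fun j => (w j).1) (w i).1) with hΦ
  change ∫ w, Φ w ∂ν ≤ B
  have hΦm : Measurable Φ := by
    refine Finset.measurable_sum _ fun i _ => ?_
    refine Measurable.sub ?_ ?_
    · exact hg.comp (f := fun w : Fin n → S × S => ((fun j => (w j).1), (w i).2)) (by fun_prop)
    · exact hg.comp (f := fun w : Fin n → S × S => ((fun j => (w j).1), (w i).1)) (by fun_prop)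
  have hΦb : ∀ w, ‖Φ w‖ ≤ n := by
    intro w
    calc ‖Φ w‖ ≤ ∑ i : Fin n, ‖g (fun j => (w j).1) (w i).2 - g (fun j => (w j).1) (w i).1‖ :=
          norm_sum_le _ _
      _ ≤ ∑ i : Fin n, 1 := by
          refine Finset.sum_le_sum fun i _ => ?_
          rw [Real.norm_eq_abs, abs_le]
          constructor <;> linarith [h0 (fun j => (w j).1) (w i).2, h0 (fun j => (w j).1) (w i).1,
            h1 (fun j => (w j).1) (w i).2, h1 (fun j => (w j).1) (w i).1]
      _ = n := by simp
  let T : (Fin n → Bool) → (Fin n → S × S) → (Fin n → S × S) := fun σ w i =>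
    (if σ i then Prod.swap else id) (w i)
  have hT : ∀ σ, MeasurePreserving (T σ) ν ν := by
    intro σ
    refine measurePreserving_pi (fun _ => μ.prod μ) (fun _ => μ.prod μ)
      (f := fun i => if σ i then Prod.swap else id) fun i => ?_
    cases hσ : σ i
    · simpa [hσ] using MeasurePreserving.id (μ.prod μ)
    · simpa [hσ] using Measure.measurePreserving_swap (μ := μ) (ν := μ)
  have hint : ∀ σ, Integrable (fun w => Φ (T σ w)) ν := fun σ =>
    Integrable.of_bound (hΦm.comp (hT σ).measurable).aestronglyMeasurable n
      (Filter.Eventually.of_forall fun w => hΦb _)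
  have hTe : ∀ σ, ∫ w, Φ (T σ w) ∂ν = ∫ w, Φ w ∂ν := by
    intro σ
    conv_rhs => rw [← (hT σ).map_eq]
    rw [integral_map (hT σ).aemeasurable hΦm.aestronglyMeasurable]
  have e1 : ∫ w, Φ w ∂ν = ∫ w, ∑ σ : Fin n → Bool, (1 / 2 ^ n : ℝ) * Φ (T σ w) ∂ν := by
    rw [integral_finsetSum _ (fun σ _ => (hint σ).const_mul _)]
    simp_rw [integral_const_mul, hTe]
    simp
  rw [e1]
  calc _ ≤ ∫ _w, B ∂ν := by
        refine integral_mono (integrable_finsetSum _ fun σ _ => (hint σ).const_mul _)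
          (integrable_const _) fun w => ?_
        refine le_trans (le_of_eq ?_) (hB w)
        refine Finset.sum_congr rfl fun σ _ => ?_
        congr 1
        refine Finset.sum_congr rfl fun i _ => ?_
        have ez : (fun j => (T σ w j).1) = (fun j => if σ j then (w j).2 else (w j).1) := by
          funext j
          cases hσ : σ j <;> simp [T, hσ]
        rw [ez]
        cases hσ : σ i <;> simp [T, hσ]
    _ = B := by simp

lemma measurable_select {Ω : Type*} [MeasurableSpace Ω] {K : ℕ} (h : Ω → Fin K → ℝ)
    (hh : ∀ i, Measurable fun x => h x i) (f : Ω → Fin K) (hf : Measurable f) :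
    Measurable fun x => h x (f x) := by
  have e : (fun x => h x (f x)) = fun x => ∑ j, if f x = j then h x j else 0 := by
    funext x; simp
  rw [e]
  refine Finset.measurable_sum _ fun j _ => ?_
  exact Measurable.ite (hf (measurableSet_singleton j)) (hh j) measurable_const

lemma simplex_le_one {K : ℕ} {p : Fin K → ℝ} (hp : p ∈ simplex K) (i : Fin K) : p i ≤ 1 := by
  rw [← hp.2]
  exact Finset.single_le_sum (fun j _ => hp.1 j) (Finset.mem_univ i)

lemma zloss_measurable {X Ω : Type*} [MeasurableSpace X] [MeasurableSpace Ω] {K : ℕ}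
    (f : Ω → X → Fin K) (hf : Measurable fun p : Ω × X => f p.1 p.2) :
    Measurable fun p : Ω × (X × Fin K) => zloss (f p.1) p.2 := by
  unfold zloss
  have h1 : Measurable fun p : Ω × (X × Fin K) => f p.1 p.2.1 :=
    hf.comp (f := fun p : Ω × (X × Fin K) => (p.1, p.2.1)) (by fun_prop)
  have h2 : Measurable fun p : Ω × (X × Fin K) => p.2.2 := by fun_prop
  refine Measurable.ite ?_ measurable_const measurable_const
  exact (measurableSet_eq_fun h1 h2).compl

section
variable {X : Type*} [MeasurableSpace X] {K : ℕ} (P : Measure X) [IsProbabilityMeasure P]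
  (ηt : X → Fin K → ℝ) (hηt : ∀ x, ηt x ∈ simplex K) (hηtm : ∀ i, Measurable fun x => ηt x i)

lemma joint_prob (hηt : ∀ x, ηt x ∈ simplex K) (hηtm : ∀ i, Measurable fun x => ηt x i) :
    IsProbabilityMeasure (jointMeasure P ηt) := by
  constructor
  unfold jointMeasure
  rw [Measure.finsetSum_apply]
  have : ∀ j, ((P.withDensity fun x => ENNReal.ofReal (ηt x j)).map fun x => (x, j)) Set.univ
      = ∫⁻ x, ENNReal.ofReal (ηt x j) ∂P := by
    intro j
    rw [Measure.map_apply (by fun_prop) MeasurableSet.univ, Set.preimage_univ,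
      withDensity_apply _ MeasurableSet.univ, Measure.restrict_univ]
  simp_rw [this]
  rw [← lintegral_finsetSum _ (fun j _ => (hηtm j).ennreal_ofReal)]
  have : ∀ x, ∑ j, ENNReal.ofReal (ηt x j) = 1 := by
    intro x
    rw [← ENNReal.ofReal_sum_of_nonneg (fun j _ => (hηt x).1 j), (hηt x).2, ENNReal.ofReal_one]
  simp [this]

lemma joint_integral (hηt : ∀ x, ηt x ∈ simplex K) (hηtm : ∀ i, Measurable fun x => ηt x i)
    (g : X × Fin K → ℝ) (hg : Measurable g) (h0 : ∀ s, 0 ≤ g s) (h1 : ∀ s, g s ≤ 1) :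
    ∫ s, g s ∂(jointMeasure P ηt) = ∑ j, ∫ x, ηt x j * g (x, j) ∂P := by
  have := joint_prob P ηt hηt hηtm
  have hgi : Integrable g (jointMeasure P ηt) :=
    Integrable.of_bound hg.aestronglyMeasurable 1 (Filter.Eventually.of_forall fun s => by
      rw [Real.norm_eq_abs, abs_of_nonneg (h0 s)]; exact h1 s)
  unfold jointMeasure at hgi ⊢
  rw [integral_finsetSum_measure (fun j _ => hgi.mono_measure (by
    rw [← Finset.sum_erase_add _ _ (Finset.mem_univ j)]
    exact Measure.le_add_left le_rfl))]
  refine Finset.sum_congr rfl fun j _ => ?_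
  rw [integral_map (by fun_prop) hg.aestronglyMeasurable,
    integral_withDensity_eq_integral_toReal_smul (hηtm j).ennreal_ofReal
      (Filter.Eventually.of_forall fun x => ENNReal.ofReal_lt_top)]
  refine integral_congr_ae (Filter.Eventually.of_forall fun x => ?_)
  simp [ENNReal.toReal_ofReal ((hηt x).1 j)]

lemma joint_zloss (hηt : ∀ x, ηt x ∈ simplex K) (hηtm : ∀ i, Measurable fun x => ηt x i)
    (f : X → Fin K) (hf : Measurable f) :
    ∫ s, zloss f s ∂(jointMeasure P ηt) = risk P ηt f := by
  have hz : Measurable (zloss f) :=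
    (zloss_measurable (Ω := Unit) (fun _ => f) (hf.comp measurable_snd)).comp
      (f := fun s : X × Fin K => ((), s)) (by fun_prop)
  rw [joint_integral P ηt hηt hηtm _ hz (zloss_nonneg f) (zloss_le_one f), risk,
    ← integral_finsetSum]
  · refine integral_congr_ae (Filter.Eventually.of_forall fun x => ?_)
    simp only [zloss]
    have : ∀ j, ηt x j * (if f x ≠ j then (1:ℝ) else 0)
        = ηt x j - (if f x = j then ηt x j else 0) := by
      intro j; by_cases h : f x = j <;> simp [h]
    simp only [this, Finset.sum_sub_distrib, (hηt x).2]
    simp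
  · intro j _
    refine Integrable.of_bound ((hηtm j).mul
      (hz.comp (f := fun x => (x, j)) (by fun_prop))).aestronglyMeasurable 1
      (Filter.Eventually.of_forall fun x => ?_)
    rw [Real.norm_eq_abs, abs_of_nonneg (mul_nonneg ((hηt x).1 j) (zloss_nonneg _ _))]
    exact mul_le_one₀ (simplex_le_one (hηt x) j) (zloss_nonneg _ _) (zloss_le_one _ _)

lemma select_integrable (η : X → Fin K → ℝ) (hη : ∀ x, η x ∈ simplex K)
    (hηm : ∀ i, Measurable fun x => η x i)
    (f : X → Fin K) (hf : Measurable f) : Integrable (fun x => 1 - η x (f x)) P := by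
  refine Integrable.of_bound (measurable_const.sub
    (measurable_select η hηm f hf)).aestronglyMeasurable 1
      (Filter.Eventually.of_forall fun x => ?_)
  rw [Real.norm_eq_abs, abs_le]
  constructor <;> linarith [(hη x).1 (f x), simplex_le_one (hη x) (f x)]

lemma sup_mem {K : ℕ} (hK : 2 ≤ K) {p : Fin K → ℝ} (hp : p ∈ simplex K) :
    0 ≤ (⨆ i, p i) ∧ (⨆ i, p i) ≤ 1 ∧ ∀ j, p j ≤ ⨆ i, p i := by
  have hne : Nonempty (Fin K) := ⟨⟨0, by omega⟩⟩
  have hb : BddAbove (Set.range p) := Set.Finite.bddAbove (Set.finite_range p)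
  refine ⟨?_, ciSup_le (simplex_le_one hp), fun j => le_ciSup hb j⟩
  exact (hp.1 ⟨0, by omega⟩).trans (le_ciSup hb _)

lemma sup_integrable (hK : 2 ≤ K) (η : X → Fin K → ℝ) (hη : ∀ x, η x ∈ simplex K)
    (hηm : ∀ i, Measurable fun x => η x i) : Integrable (fun x => 1 - ⨆ i, η x i) P := by
  refine Integrable.of_bound (measurable_const.sub
    (Measurable.iSup hηm)).aestronglyMeasurable 1
      (Filter.Eventually.of_forall fun x => ?_)
  rw [Real.norm_eq_abs, abs_le]
  have := sup_mem hK (hη x)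
  constructor <;> linarith [this.1, this.2.1]

lemma signal_measurable (η : X → Fin K → ℝ)
    (hηm : ∀ i, Measurable fun x => η x i) (hηtm : ∀ i, Measurable fun x => ηt x i) (κ : ℝ) :
    MeasurableSet (signalRegion η ηt κ) := by
  unfold signalRegion RSS
  refine measurableSet_lt measurable_const (Measurable.iInf fun j => ?_)
  have h1 : Measurable fun x => (⨆ i, η x i) - η x j := (Measurable.iSup hηm).sub (hηm j)
  have h2 : Measurable fun x => (⨆ i, ηt x i) - ηt x j := (Measurable.iSup hηtm).sub (hηtm j)
  exact Measurable.ite (h1 (measurableSet_singleton 0)) measurable_const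
    (h2.div h1).ennreal_ofReal

lemma excess_transfer (hK : 2 ≤ K) (η : X → Fin K → ℝ) (hη : ∀ x, η x ∈ simplex K)
    (hηm : ∀ i, Measurable fun x => η x i)
    (hηt : ∀ x, ηt x ∈ simplex K) (hηtm : ∀ i, Measurable fun x => ηt x i)
    (ε κ : ℝ) (hκ : 0 < κ) (hsig : 1 - ε ≤ (P (signalRegion η ηt κ)).toReal)
    (f : X → Fin K) (hf : Measurable f) :
    risk P η f - bayesRisk P η ≤ ε + (1 / κ) * (risk P ηt f - bayesRisk P ηt) := by
  have hA := signal_measurable ηt η hηm hηtm κ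
  set A := signalRegion η ηt κ with hAdef
  have hAc : P.real Aᶜ ≤ ε := by
    rw [probReal_compl_eq_one_sub hA]
    have : P.real A = (P A).toReal := rfl
    linarith
  unfold risk bayesRisk
  have i1 := select_integrable P η hη hηm f hf
  have i2 := sup_integrable P hK η hη hηm
  have i3 := select_integrable P ηt hηt hηtm f hf
  have i4 := sup_integrable P hK ηt hηt hηtm
  rw [← integral_sub i1 i2, ← integral_sub i3 i4, ← integral_const_mul]
  have i5 : Integrable (Aᶜ.indicator (fun _ => (1 : ℝ))) P :=
    (integrable_const 1).indicator hA.compl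
  have i6 : Integrable (fun x => (1 / κ) * ((1 - ηt x (f x)) - (1 - ⨆ i, ηt x i))) P :=
    (i3.sub i4).const_mul (1 / κ)
  calc _ ≤ ∫ x, (Aᶜ.indicator (fun _ => (1 : ℝ)) x +
        (1 / κ) * ((1 - ηt x (f x)) - (1 - ⨆ i, ηt x i))) ∂P := by
        refine integral_mono (i1.sub i2) (i5.add i6) fun x => ?_
        simp only [Pi.sub_apply]
        obtain ⟨a1, a2, a3⟩ := sup_mem hK (hη x)
        obtain ⟨b1, b2, b3⟩ := sup_mem hK (hηt x)
        have hb : 0 ≤ (1 / κ) * ((1 - ηt x (f x)) - (1 - ⨆ i, ηt x i)) := by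
          have := b3 (f x)
          apply mul_nonneg (by positivity); linarith
        by_cases hx : x ∈ A
        · rw [Set.indicator_of_notMem (by simpa using hx), zero_add]
          have hx' : ENNReal.ofReal κ < RSS (η x) (ηt x) := hx
          have hj := lt_of_lt_of_le hx' (iInf_le _ (f x))
          by_cases hz : (⨆ i, η x i) - η x (f x) = 0
          · linarith
          · rw [if_neg hz] at hj
            have hpos : 0 < (⨆ i, η x i) - η x (f x) :=
              lt_of_le_of_ne (by linarith [a3 (f x)]) (Ne.symm hz)
            have hj' := (ENNReal.ofReal_lt_ofReal_iff_of_nonneg hκ.le).mp hj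
            rw [lt_div_iff₀ hpos] at hj'
            rw [one_div, inv_mul_eq_div, le_div_iff₀ hκ]
            linarith
        · rw [Set.indicator_of_mem (by simpa using hx)]
          linarith [(hη x).1 (f x)]
    _ = P.real Aᶜ + ∫ x, (1 / κ) * ((1 - ηt x (f x)) - (1 - ⨆ i, ηt x i)) ∂P := by
        rw [integral_add i5 i6, integral_indicator_const _ hA.compl]; simp
    _ ≤ _ := by gcongr

lemma risk_measurable {Ω : Type*} [MeasurableSpace Ω] (η : X → Fin K → ℝ)
    (hηm : ∀ i, Measurable fun x => η x i) (f : Ω → X → Fin K)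
    (hf : Measurable fun p : Ω × X => f p.1 p.2) :
    Measurable fun z => risk P η (f z) := by
  unfold risk
  have : Measurable fun p : Ω × X => 1 - η p.2 (f p.1 p.2) :=
    measurable_const.sub (measurable_select (fun p : Ω × X => η p.2)
      (fun i => (hηm i).comp measurable_snd) (fun p : Ω × X => f p.1 p.2) hf)
  exact this.stronglyMeasurable.integral_prod_right.measurable

lemma risk_bound (η : X → Fin K → ℝ) (hη : ∀ x, η x ∈ simplex K)
    (hηm : ∀ i, Measurable fun x => η x i) (f : X → Fin K) (hf : Measurable f) :
    ‖risk P η f‖ ≤ 1 := by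
  unfold risk
  have := norm_integral_le_of_norm_le_const (μ := P) (f := fun x => 1 - η x (f x)) (C := 1)
    (Filter.Eventually.of_forall fun x => by
      rw [Real.norm_eq_abs, abs_le]
      constructor <;> linarith [(hη x).1 (f x), simplex_le_one (hη x) (f x)])
  simpa using this

end

/-- Excess risk upper bound for noise-ignorant ERM over a class of Natarajan
dimension `V` containing the noisy Bayes classifier:
`E[R(f̂) - R(f*)] ≤ ε + (1/κ)·16·√((V log n + 2V log K + 4)/(2n))`. -/
theorem ni_erm_excess_risk_upper_bound
    {X : Type*} [MeasurableSpace X] (K V n : ℕ) (hK : 2 ≤ K) (hn : 1 ≤ n)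
    (ε κ : ℝ) (hε : ε ∈ Set.Icc (0 : ℝ) 1) (hκ : 0 < κ)
    (P : Measure X) [IsProbabilityMeasure P]
    (η ηt : X → Fin K → ℝ)
    (hη : ∀ x, η x ∈ simplex K) (hηt : ∀ x, ηt x ∈ simplex K)
    (hηm : ∀ i, Measurable fun x => η x i) (hηtm : ∀ i, Measurable fun x => ηt x i)
    (hsig : 1 - ε ≤ (P (signalRegion η ηt κ)).toReal)
    (F : Set (X → Fin K)) (hFm : ∀ f ∈ F, Measurable f)
    (hdim_le : ∀ C : Finset X, NShatters F C → C.card ≤ V)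
    (hdim_ex : ∃ C : Finset X, NShatters F C ∧ C.card = V)
    (hbayes : ∃ ftil ∈ F, ∀ x, ftil x ∈ argmaxSet (ηt x))
    (fhat : (Fin n → X × Fin K) → X → Fin K)
    (hmem : ∀ z, fhat z ∈ F)
    (hERM : ∀ z, ∀ f ∈ F,
      (Finset.univ.filter fun i => fhat z (z i).1 ≠ (z i).2).card ≤
        (Finset.univ.filter fun i => f (z i).1 ≠ (z i).2).card)
    (hfhat : Measurable fun p : (Fin n → X × Fin K) × X => fhat p.1 p.2) :
    (∫ z, (risk P η (fhat z) - bayesRisk P η)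
        ∂(Measure.pi fun _ : Fin n => jointMeasure P ηt)) ≤
      ε + (1 / κ) * 16 *
        Real.sqrt ((V * Real.log n + 2 * V * Real.log K + 4) / (2 * n)) := by
  have hμ := joint_prob P ηt hηt hηtm
  set μ := jointMeasure P ηt with hμdef
  set ν := Measure.pi fun _ : Fin n => μ with hν
  have hn0 : (0 : ℝ) < n := by exact_mod_cast hn
  obtain ⟨ftil, hftil, hft⟩ := hbayes
  have hfm : ∀ z, Measurable (fhat z) := fun z => hFm _ (hmem z)
  have hftm := hFm _ hftil
  have hbt : bayesRisk P ηt = risk P ηt ftil := by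
    unfold bayesRisk risk
    refine integral_congr_ae (Filter.Eventually.of_forall fun x => ?_)
    have : ηt x (ftil x) = ⨆ j, ηt x j := hft x
    simp only [this]
  have hint : ∀ (θ : X → Fin K → ℝ), (∀ x, θ x ∈ simplex K) →
      (∀ i, Measurable fun x => θ x i) → Integrable (fun z => risk P θ (fhat z)) ν :=
    fun θ hθ hθm => Integrable.of_bound (risk_measurable P θ hθm fhat hfhat).aestronglyMeasurable 1
      (Filter.Eventually.of_forall fun z => risk_bound P θ hθ hθm _ (hfm z))
  set s := Real.sqrt ((V * Real.log n + 2 * V * Real.log K + 4) / (2 * n)) with hs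
  have hs0 : 0 ≤ s := Real.sqrt_nonneg _
  have hzm := zloss_measurable fhat hfhat
  have hsym := symmetrization μ (fun z t => zloss (fhat z) t) hzm
    (fun z t => zloss_nonneg _ _) (fun z t => zloss_le_one _ _) (n * (3 * s))
    (fun w => core_bound hK F V n hn hdim_le w
      (fun σ => fhat (fun j => if σ j then (w j).2 else (w j).1)) (fun σ => hmem _))
  have hzone : ∀ f : X → Fin K, Measurable f → Measurable (zloss f) := fun f hf =>
    (zloss_measurable (Ω := Unit) (fun _ => f) (hf.comp measurable_snd)).comp
      (f := fun s : X × Fin K => ((), s)) (by fun_prop)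
  have hbd : ∀ (f : X → Fin K) t, ‖zloss f t‖ ≤ 1 := fun f t => by
    rw [Real.norm_eq_abs, abs_of_nonneg (zloss_nonneg _ _)]; exact zloss_le_one _ _
  have hev : ∀ (f : X → Fin K), Measurable f → ∀ i : Fin n,
      Integrable (fun z : Fin n → X × Fin K => zloss f (z i)) ν := fun f hf i =>
    Integrable.of_bound ((hzone f hf).comp (measurable_pi_apply i)).aestronglyMeasurable 1
      (Filter.Eventually.of_forall fun z => hbd _ _)
  have hsum : ∀ (f : X → Fin K), Measurable f →
      ∫ z : Fin n → X × Fin K, ∑ i, zloss f (z i) ∂ν = n * risk P ηt f := by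
    intro f hf
    rw [integral_finsetSum _ (fun i _ => hev f hf i)]
    have : ∀ i : Fin n, ∫ z : Fin n → X × Fin K, zloss f (z i) ∂ν = risk P ηt f := by
      intro i
      rw [← joint_zloss P ηt hηt hηtm f hf]
      have hmp := measurePreserving_eval (fun _ : Fin n => μ) i
      rw [← hμdef, ← hmp.map_eq,
        integral_map hmp.aemeasurable (hzone f hf).aestronglyMeasurable]
    simp [this]
  -- the integrands on the product
  have hm1 : ∀ i : Fin n, Integrable (fun p : (Fin n → X × Fin K) × (Fin n → X × Fin K) =>
      zloss (fhat p.1) (p.2 i)) (ν.prod ν) := fun i =>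
    Integrable.of_bound (hzm.comp
      (f := fun p : (Fin n → X × Fin K) × (Fin n → X × Fin K) => (p.1, p.2 i))
      (by fun_prop)).aestronglyMeasurable 1 (Filter.Eventually.of_forall fun z => hbd _ _)
  have hm2 : ∀ i : Fin n, Integrable (fun p : (Fin n → X × Fin K) × (Fin n → X × Fin K) =>
      zloss (fhat p.1) (p.1 i)) (ν.prod ν) := fun i =>
    Integrable.of_bound (hzm.comp
      (f := fun p : (Fin n → X × Fin K) × (Fin n → X × Fin K) => (p.1, p.1 i))
      (by fun_prop)).aestronglyMeasurable 1 (Filter.Eventually.of_forall fun z => hbd _ _)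
  have hm3 : ∀ i : Fin n, Integrable (fun z : Fin n → X × Fin K =>
      zloss (fhat z) (z i)) ν := fun i =>
    Integrable.of_bound (hzm.comp
      (f := fun z : Fin n → X × Fin K => (z, z i))
      (by fun_prop)).aestronglyMeasurable 1 (Filter.Eventually.of_forall fun z => hbd _ _)
  have hm4 : Integrable (fun p : (Fin n → X × Fin K) × (Fin n → X × Fin K) =>
      ∑ i, (zloss (fhat p.1) (p.2 i) - zloss (fhat p.1) (p.1 i))) (ν.prod ν) :=
    integrable_finsetSum _ fun i _ => (hm1 i).sub (hm2 i)
  rw [← hν, integral_prod _ hm4] at hsym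
  have hinner : ∀ z, ∫ z', (∑ i, (zloss (fhat z) (z' i) - zloss (fhat z) (z i))) ∂ν
      = n * risk P ηt (fhat z) - ∑ i, zloss (fhat z) (z i) := by
    intro z
    simp_rw [Finset.sum_sub_distrib]
    rw [integral_sub (integrable_finsetSum _ fun i _ => hev _ (hfm z) i) (integrable_const _),
      hsum _ (hfm z)]
    simp
  simp only [hinner] at hsym
  have hERM' : ∀ z : Fin n → X × Fin K,
      ∑ i, zloss (fhat z) (z i) ≤ ∑ i, zloss ftil (z i) := by
    intro z
    have h := hERM z ftil hftil
    have e : ∀ f : X → Fin K, ∑ i, zloss f (z i) =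
        ((Finset.univ.filter fun i => f (z i).1 ≠ (z i).2).card : ℝ) := by
      intro f; simp only [zloss, Finset.sum_boole]
    rw [e, e]; exact_mod_cast h
  have hexc : n * ((∫ z, risk P ηt (fhat z) ∂ν) - risk P ηt ftil) ≤ n * (3 * s) := by
    refine le_trans ?_ hsym
    have : n * ((∫ z, risk P ηt (fhat z) ∂ν) - risk P ηt ftil) =
        ∫ z, (n * risk P ηt (fhat z) - ∑ i, zloss ftil (z i)) ∂ν := by
      rw [integral_sub ((hint ηt hηt hηtm).const_mul _)
        (integrable_finsetSum _ fun i _ => hev _ hftm i), hsum _ hftm, integral_const_mul]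
      ring
    rw [this]
    refine integral_mono (((hint ηt hηt hηtm).const_mul _).sub
      (integrable_finsetSum _ fun i _ => hev _ hftm i))
      (((hint ηt hηt hηtm).const_mul _).sub (integrable_finsetSum _ fun i _ => hm3 i)) fun z => ?_
    simp only [Pi.sub_apply]
    linarith [hERM' z]
  have hexc' := le_of_mul_le_mul_left hexc hn0
  calc _ ≤ ∫ z, (ε + (1 / κ) * (risk P ηt (fhat z) - bayesRisk P ηt)) ∂ν := by
        refine integral_mono ((hint η hη hηm).sub (integrable_const _))
          ((integrable_const _).add (((hint ηt hηt hηtm).sub (integrable_const _)).const_mul _))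
          fun z => ?_
        exact excess_transfer P ηt hK η hη hηm hηt hηtm ε κ hκ hsig _ (hfm z)
    _ = ε + (1 / κ) * ((∫ z, risk P ηt (fhat z) ∂ν) - risk P ηt ftil) := by
        have i7 : Integrable (fun z => (1 / κ) * (risk P ηt (fhat z) - bayesRisk P ηt)) ν :=
          ((hint ηt hηt hηtm).sub (integrable_const _)).const_mul _
        rw [integral_add (integrable_const _) i7, integral_const_mul,
          integral_sub (hint ηt hηt hηtm) (integrable_const _), hbt]
        simp
    _ ≤ ε + (1 / κ) * (3 * s) := by gcongr
    _ ≤ ε + (1 / κ) * 16 * s := by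
        have : 0 ≤ 1 / κ * s := by positivity
        nlinarith
end
end

section
/- (Excess risk upper bound under the smooth relative signal margin condition.) Let ε ∈ [0,1], α > 0, C_α > 0. Let (P_X, η, η̃) satisfy the (ε, α, C_α)-smooth relative signal margin condition: for all κ > 0, P_X({x : M(x; η, η̃) ≤ κ}) ≤ C_α·κ^α + ε. Let F be a class of measurable classifiers f : 𝒳 → {1,…,K} with Natarajan dimension V containing the noisy Bayes classifier f̃*, and let f̂ ∈ argmin_{f ∈ F} (1/n) Σ_{i=1}^n 1{f(X_i) ≠ Ỹ_i} be an empirical risk minimizer over an i.i.d. sample Z^n from P_{XỸ}. Then, assuming all maps involved are measurable, E_{Z^n}[ R(f̂) − R(f*) ] ≤ ε + inf_{κ > 0} { C_α·κ^α + (1/κ)·16·√( (V·log n + 2V·log K + 4) / (2n) ) }. -/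
open MeasureTheory ENNReal

noncomputable section

/-- finite set of representatives -/
theorem exists_reps {X : Type*} {K : ℕ} (F : Set (X → Fin K)) (C : Finset X) :
    ∃ r : (X → Fin K) → (X → Fin K), (∀ f ∈ F, r f ∈ F) ∧
        (∀ f ∈ F, ∀ x ∈ C, r f x = f x) ∧
        (∀ f ∈ F, ∀ g ∈ F, (∀ x ∈ C, f x = g x) → r f = r g) ∧ (r '' F).Finite := by
  classical
  let res : (X → Fin K) → (C → Fin K) := fun f x => f x
  let r : (X → Fin K) → (X → Fin K) := fun f =>
    if h : ∃ g ∈ F, res g = res f then h.choose else f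
  have key : ∀ f ∈ F, r f ∈ F ∧ res (r f) = res f := by
    intro f hf
    have h : ∃ g ∈ F, res g = res f := ⟨f, hf, rfl⟩
    simp only [r, dif_pos h]
    exact h.choose_spec
  have key2 : ∀ f ∈ F, ∀ g ∈ F, res f = res g → r f = r g := by
    intro f hf g hg hfg
    have h : ∃ g ∈ F, res g = res f := ⟨f, hf, rfl⟩
    have h' : ∃ g' ∈ F, res g' = res g := ⟨g, hg, rfl⟩
    simp only [r, dif_pos h, dif_pos h']
    simp only [hfg]
  refine ⟨r, fun f hf => (key f hf).1, fun f hf x hx => congrFun (key f hf).2 ⟨x, hx⟩, ?_, ?_⟩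
  · intro f hf g hg hfg
    exact key2 f hf g hg (funext fun x => hfg x x.2)
  · refine Set.Finite.of_finite_image (f := res) (Set.toFinite _) ?_
    rintro _ ⟨f, hf, rfl⟩ _ ⟨g, hg, rfl⟩ h
    refine key2 f hf g hg ?_
    rw [← (key f hf).2, ← (key g hg).2, h]

theorem nat_lemma {X : Type*} {K : ℕ} (C : Finset X) :
    ∀ (d : ℕ) (H : Finset (X → Fin K)),
      (∀ f ∈ H, ∀ g ∈ H, (∀ x ∈ C, f x = g x) → f = g) →
      (∀ S : Finset X, S ⊆ C → NShatters (H : Set (X → Fin K)) S → S.card ≤ d) →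
      H.card ≤ (1 + C.card * K ^ 2) ^ d := by
  classical
  induction C using Finset.induction_on with
  | empty =>
    intro d H hsep _
    simp only [Finset.card_empty, zero_mul, add_zero, one_pow]
    exact Finset.card_le_one.mpr (fun f hf g hg => hsep f hf g hg (by simp))
  | insert a C ha ih =>
    intro d H hsep hsh
    -- representatives
    obtain ⟨r, hrH, hrC, hreq, -⟩ := exists_reps (H : Set (X → Fin K)) C
    set H' := H.image r with hH'
    let G : Fin K × Fin K → Finset (X → Fin K) := fun q =>
      H.filter fun f => r f ≠ f ∧ f a = q.1 ∧ r f a = q.2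
    have hcover : H ⊆ H' ∪ Finset.univ.biUnion G := by
      intro f hf
      by_cases h : r f = f
      · exact Finset.mem_union_left _ (Finset.mem_image.mpr ⟨f, hf, h⟩)
      · refine Finset.mem_union_right _ (Finset.mem_biUnion.mpr ⟨(f a, r f a), Finset.mem_univ _, ?_⟩)
        simp [G, hf, h]
    have hcard : H.card ≤ H'.card + ∑ q, (G q).card :=
      (Finset.card_le_card hcover).trans ((Finset.card_union_le _ _).trans
        (Nat.add_le_add_left Finset.card_biUnion_le _))
    have hH'sub : H' ⊆ H := by
      intro f hf
      obtain ⟨g, hg, rfl⟩ := Finset.mem_image.mp hf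
      exact hrH g hg
    have h1 : H'.card ≤ (1 + C.card * K ^ 2) ^ d := by
      refine ih d H' ?_ ?_
      · intro f hf g hg hfg
        obtain ⟨f', hf', rfl⟩ := Finset.mem_image.mp hf
        obtain ⟨g', hg', rfl⟩ := Finset.mem_image.mp hg
        refine hreq f' hf' g' hg' fun x hx => ?_
        rw [← hrC f' hf' x hx, ← hrC g' hg' x hx]; exact hfg x hx
      · rintro S hS ⟨g, h, hne, hv⟩
        refine hsh S (hS.trans (Finset.subset_insert _ _)) ⟨g, h, hne, fun v hv' => ?_⟩
        obtain ⟨f, hf, hfx⟩ := hv v hv'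
        exact ⟨f, hH'sub hf, hfx⟩
    have hGsep : ∀ q, ∀ f ∈ G q, ∀ g ∈ G q, (∀ x ∈ C, f x = g x) → f = g := by
      intro q f hf g hg hfg
      simp only [G, Finset.mem_filter] at hf hg
      refine hsep f hf.1 g hg.1 fun x hx => ?_
      rcases Finset.mem_insert.mp hx with rfl | hx
      · rw [hf.2.2.1, hg.2.2.1]
      · exact hfg x hx
    have hGsh : ∀ q, ∀ S ⊆ C, NShatters (G q : Set (X → Fin K)) S → S.card + 1 ≤ d := by
      rintro q S hS ⟨g, h, hne, hv⟩
      have haS : a ∉ S := fun h => ha (hS h)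
      have hq : q.1 ≠ q.2 := by
        obtain ⟨f, hf, -⟩ := hv g (fun x _ => Or.inl rfl)
        simp only [G, Finset.coe_filter, Set.mem_ofPred_eq] at hf
        intro hqq
        refine hf.2.1 (hsep _ (hrH f hf.1) _ hf.1 fun x hx => ?_)
        rcases Finset.mem_insert.mp hx with rfl | hx
        · rw [hf.2.2.1, hf.2.2.2, hqq]
        · exact hrC f hf.1 x hx
      rw [← Finset.card_insert_of_notMem haS]
      refine hsh _ (Finset.insert_subset_insert _ hS)
        ⟨Function.update g a q.1, Function.update h a q.2, ?_, ?_⟩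
      · intro x hx
        rcases Finset.mem_insert.mp hx with rfl | hx
        · simpa using hq
        · have : x ≠ a := fun e => haS (e ▸ hx)
          simpa [this] using hne x hx
      · intro v hv'
        obtain ⟨f, hf, hfv⟩ := hv v (fun x hx => by
          have hxa : x ≠ a := fun e => haS (e ▸ hx)
          have := hv' x (Finset.mem_insert_of_mem hx)
          simpa [hxa] using this)
        simp only [G, Finset.coe_filter, Set.mem_ofPred_eq] at hf
        have hva := hv' a (Finset.mem_insert_self _ _)
        simp only [Function.update_self] at hva
        rcases hva with hva | hva
        · refine ⟨f, hf.1, fun x hx => ?_⟩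
          rcases Finset.mem_insert.mp hx with rfl | hx
          · rw [hva, hf.2.2.1]
          · exact hfv x hx
        · refine ⟨r f, hrH f hf.1, fun x hx => ?_⟩
          rcases Finset.mem_insert.mp hx with rfl | hx
          · rw [hva, hf.2.2.2]
          · rw [hrC f hf.1 x (hS hx)]; exact hfv x hx
    rw [Finset.card_insert_of_notMem ha]
    cases d with
    | zero =>
      have : ∀ q, (G q).card = 0 := by
        intro q
        rw [Finset.card_eq_zero]
        by_contra hne
        obtain ⟨f, hf⟩ := Finset.nonempty_iff_ne_empty.mpr hne
        have := hGsh q ∅ (by simp) ⟨f, f, by simp, fun v _ => ⟨f, hf, by simp⟩⟩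
        omega
      simp only [this, Finset.sum_const_zero, pow_zero] at hcard h1 ⊢
      omega
    | succ d =>
      have h2 : ∀ q, (G q).card ≤ (1 + C.card * K ^ 2) ^ d := fun q =>
        ih d (G q) (hGsep q) (fun S hS hh => by have := hGsh q S hS hh; omega)
      have h3 : ∑ q, (G q).card ≤ K ^ 2 * (1 + C.card * K ^ 2) ^ d := by
        refine (Finset.sum_le_card_nsmul _ _ _ fun q _ => h2 q).trans ?_
        simp [sq]
      calc H.card ≤ (1 + C.card * K ^ 2) ^ (d+1) + K ^ 2 * (1 + C.card * K ^ 2) ^ d := by omega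
        _ = (1 + C.card * K ^ 2) ^ d * (1 + (C.card + 1) * K ^ 2) := by ring
        _ ≤ (1 + (C.card + 1) * K ^ 2) ^ d * (1 + (C.card + 1) * K ^ 2) := by
            gcongr; omega
        _ = _ := by ring



/-- Rademacher sign. -/
def sg (b : Bool) : ℝ := if b then 1 else -1

theorem sum_sign_exp {n : ℕ} (l : ℝ) (u : Fin n → ℝ) (hu : ∀ i, |u i| ≤ 1) :
    ∑ σ : Fin n → Bool, Real.exp (l * ∑ i, sg (σ i) * u i) ≤
      2 ^ n * Real.exp (n * l ^ 2 / 2) := by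
  have h1 : ∀ σ : Fin n → Bool, Real.exp (l * ∑ i, sg (σ i) * u i)
      = ∏ i, Real.exp (l * (sg (σ i) * u i)) := by
    intro σ
    rw [Finset.mul_sum, Real.exp_sum]
  simp_rw [h1]
  have h2 := Finset.prod_univ_sum (fun _ : Fin n => (Finset.univ : Finset Bool))
    (fun i b => Real.exp (l * (sg b * u i)))
  rw [Fintype.piFinset_univ] at h2
  rw [← h2]
  have h3 : ∀ i : Fin n, ∑ b : Bool, Real.exp (l * (sg b * u i)) ≤ 2 * Real.exp (l ^ 2 / 2) := by
    intro i
    have : ∑ b : Bool, Real.exp (l * (sg b * u i)) = 2 * Real.cosh (l * u i) := by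
      rw [Real.cosh_eq]; simp [sg]; ring
    rw [this]
    have h4 := Real.cosh_le_exp_half_sq (l * u i)
    have h5 : (l * u i) ^ 2 / 2 ≤ l ^ 2 / 2 := by
      have : u i ^ 2 ≤ 1 := by
        rw [← sq_abs]; exact pow_le_one₀ (abs_nonneg _) (hu i)
      nlinarith [sq_nonneg l]
    have := Real.exp_le_exp.mpr h5
    linarith
  calc ∏ i, ∑ b : Bool, Real.exp (l * (sg b * u i))
      ≤ ∏ _i : Fin n, (2 * Real.exp (l ^ 2 / 2)) :=
        Finset.prod_le_prod (fun i _ => Finset.sum_nonneg fun b _ => (Real.exp_pos _).le)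
          (fun i _ => h3 i)
    _ = 2 ^ n * Real.exp (n * l ^ 2 / 2) := by
        rw [Finset.prod_const, Finset.card_univ, Fintype.card_fin, mul_pow, ← Real.exp_nat_mul]
        congr 2; ring

theorem massart_s6 {n : ℕ} (hn : 1 ≤ n) {ι : Type*} (T : Finset ι) (u : ι → Fin n → ℝ)
    (hu : ∀ t ∈ T, ∀ i, |u t i| ≤ 1) (t : (Fin n → Bool) → ι) (ht : ∀ σ, t σ ∈ T)
    (L : ℝ) (hL : 0 < L) (hT : (T.card : ℝ) ≤ Real.exp L) :
    ∑ σ : Fin n → Bool, ∑ i, sg (σ i) * u (t σ) i ≤ 2 ^ n * Real.sqrt (2 * n * L) := by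
  have hn0 : (0 : ℝ) < n := by exact_mod_cast hn
  set l := Real.sqrt (2 * L / n) with hl
  have hlpos : 0 < l := Real.sqrt_pos.mpr (by positivity)
  have hl2 : l ^ 2 = 2 * L / n := Real.sq_sqrt (by positivity)
  have hnl : n * l ^ 2 / 2 = L := by rw [hl2]; field_simp
  have hmul : l * Real.sqrt (2 * n * L) = 2 * L := by
    have he : 2 * L / n * (2 * n * L) = (2 * L) ^ 2 := by field_simp
    rw [hl, ← Real.sqrt_mul (by positivity), he]
    exact Real.sqrt_sq (by positivity)
  obtain ⟨a, ha⟩ : ∃ a : (Fin n → Bool) → ℝ, a = fun σ => ∑ i, sg (σ i) * u (t σ) i := ⟨_, rfl⟩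
  have ha' : ∀ σ, ∑ i, sg (σ i) * u (t σ) i = a σ := fun σ => by rw [ha]
  simp only [ha']
  have h1 : ∑ σ, Real.exp (l * a σ) ≤ Real.exp L * (2 ^ n * Real.exp L) := by
    calc ∑ σ, Real.exp (l * a σ)
        ≤ ∑ σ : Fin n → Bool, ∑ s ∈ T, Real.exp (l * ∑ i, sg (σ i) * u s i) := by
          refine Finset.sum_le_sum fun σ _ => ?_
          rw [← ha' σ]
          exact Finset.single_le_sum (f := fun s => Real.exp (l * ∑ i, sg (σ i) * u s i))
            (fun s _ => (Real.exp_pos _).le) (ht σ)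
      _ = ∑ s ∈ T, ∑ σ : Fin n → Bool, Real.exp (l * ∑ i, sg (σ i) * u s i) := by
          rw [Finset.sum_comm]
      _ ≤ ∑ s ∈ T, 2 ^ n * Real.exp (n * l ^ 2 / 2) :=
          Finset.sum_le_sum fun s hs => sum_sign_exp l (u s) (hu s hs)
      _ = T.card * (2 ^ n * Real.exp L) := by rw [hnl]; simp
      _ ≤ _ := by gcongr
  have h2 : ∑ σ, (l * a σ - 2 * L + 1) ≤ ∑ σ, Real.exp (l * a σ) * Real.exp (-(2 * L)) := by
    refine Finset.sum_le_sum fun σ _ => ?_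
    rw [← Real.exp_add]
    have := Real.add_one_le_exp (l * a σ + -(2 * L))
    linarith
  rw [← Finset.sum_mul] at h2
  have h3 : (∑ σ, Real.exp (l * a σ)) * Real.exp (-(2 * L)) ≤ 2 ^ n := by
    calc _ ≤ Real.exp L * (2 ^ n * Real.exp L) * Real.exp (-(2 * L)) := by gcongr
      _ = 2 ^ n * Real.exp (L + L + -(2 * L)) := by rw [Real.exp_add, Real.exp_add]; ring
      _ = 2 ^ n := by rw [show L + L + -(2 * L) = 0 by ring]; simp
  have h4 : ∑ σ : Fin n → Bool, (l * a σ - 2 * L + 1) = l * ∑ σ, a σ - 2 ^ n * (2 * L) + 2 ^ n := by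
    rw [Finset.sum_add_distrib, Finset.sum_sub_distrib, ← Finset.mul_sum]
    simp
  refine le_of_mul_le_mul_left ?_ hlpos
  calc l * ∑ σ, a σ ≤ 2 ^ n * (2 * L) := by linarith
    _ = _ := by rw [← hmul]; ring

/-- swap coordinates -/
def swapc {Z : Type*} (b : Bool) (p : Z × Z) : Z × Z := if b then p else p.swap

theorem symmetrization_s6 {Z : Type*} [MeasurableSpace Z] (μ : Measure Z) [IsProbabilityMeasure μ]
    {n : ℕ} (hn : 1 ≤ n) (g : (Fin n → Z) → Z → ℝ)
    (hg : Measurable fun p : (Fin n → Z) × Z => g p.1 p.2)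
    (hg0 : ∀ z y, g z y ∈ Set.Icc (0 : ℝ) 1) (L : ℝ) (hL : 0 < L)
    (hT : ∀ w : Fin n → Z × Z, ∃ T : Finset (Z → ℝ), (T.card : ℝ) ≤ Real.exp L ∧
      (∀ t ∈ T, ∀ y, t y ∈ Set.Icc (0 : ℝ) 1) ∧
      ∀ z, ∃ t ∈ T, ∀ i, t (w i).1 = g z (w i).1 ∧ t (w i).2 = g z (w i).2) :
    ∫ z, (n * (∫ y, g z y ∂μ) - ∑ i, g z (z i)) ∂(Measure.pi fun _ : Fin n => μ) ≤
      Real.sqrt (2 * n * L) := by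
  set Q := Measure.pi fun _ : Fin n => μ.prod μ with hQ
  set Rn := Measure.pi fun _ : Fin n => μ with hR
  let Φ : (Fin n → Z × Z) → ℝ := fun w =>
    ∑ i, (g (fun i => (w i).1) (w i).2 - g (fun i => (w i).1) (w i).1)
  let Ψ : (Fin n → Z) × (Fin n → Z) → ℝ := fun p => ∑ i, (g p.1 (p.2 i) - g p.1 (p.1 i))
  have hΨm : Measurable Ψ := by
    refine Finset.measurable_sum _ fun i _ => Measurable.sub ?_ ?_
    · exact hg.comp (measurable_fst.prodMk ((measurable_pi_apply i).comp measurable_snd))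
    · exact hg.comp (measurable_fst.prodMk ((measurable_pi_apply i).comp measurable_fst))
  have hΨb : ∀ p, ‖Ψ p‖ ≤ n := by
    intro p
    refine (norm_sum_le _ _).trans ?_
    calc _ ≤ ∑ _i : Fin n, (1 : ℝ) := Finset.sum_le_sum fun i _ => by
            rw [Real.norm_eq_abs, abs_le]
            have h1 := hg0 p.1 (p.2 i); have h2 := hg0 p.1 (p.1 i)
            constructor <;> linarith [h1.1, h1.2, h2.1, h2.2]
      _ = n := by simp
  have hΨi : Integrable Ψ (Rn.prod Rn) :=
    Integrable.of_bound hΨm.aestronglyMeasurable n (Filter.Eventually.of_forall hΨb)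
  have hmp := measurePreserving_arrowProdEquivProdArrow Z Z (Fin n) (fun _ => μ) (fun _ => μ)
  have hΦΨ : ∫ w, Φ w ∂Q = ∫ p, Ψ p ∂(Rn.prod Rn) :=
    hmp.integral_comp' Ψ
  have hΦm : Measurable Φ := hΨm.comp hmp.measurable
  have hΦb : ∀ w, ‖Φ w‖ ≤ n := fun w => hΨb (MeasurableEquiv.arrowProdEquivProdArrow Z Z (Fin n) w)
  have hgz : ∀ z, Measurable (g z) := fun z => hg.comp measurable_prodMk_left
  have hgi : ∀ z, ∀ i : Fin n, Integrable (fun z' : Fin n → Z => g z (z' i)) Rn := fun z i =>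
    Integrable.of_bound ((hgz z).comp (measurable_pi_apply i)).aestronglyMeasurable 1
      (Filter.Eventually.of_forall fun z' => by
        rw [Real.norm_eq_abs, abs_of_nonneg (hg0 _ _).1]; exact (hg0 _ _).2)
  have hLHS : ∫ z, (n * (∫ y, g z y ∂μ) - ∑ i, g z (z i)) ∂(Rn) = ∫ w, Φ w ∂Q := by
    rw [hΦΨ, integral_prod _ hΨi]
    refine integral_congr_ae (Filter.Eventually.of_forall fun z => ?_)
    simp only [Ψ]
    have hgs : ∀ i : Fin n, Integrable (fun z' : Fin n → Z => g z (z' i) - g z (z i)) Rn :=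
      fun i => (hgi z i).sub (integrable_const _)
    rw [integral_finsetSum _ fun i _ => hgs i]
    have : ∀ i : Fin n, ∫ z' : Fin n → Z, (g z (z' i) - g z (z i)) ∂(Rn)
        = (∫ y, g z y ∂μ) - g z (z i) := by
      intro i
      rw [integral_sub (hgi z i) (integrable_const _)]
      simp only [integral_const, probReal_univ, one_smul]
      congr 1
      have he := measurePreserving_eval (fun _ : Fin n => μ) i
      rw [← he.map_eq, integral_map he.measurable.aemeasurable (hgz z).aestronglyMeasurable]
    simp only [this, Finset.sum_sub_distrib]
    simp
  rw [hLHS]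
  -- swap invariance
  let S : (Fin n → Bool) → (Fin n → Z × Z) → (Fin n → Z × Z) := fun σ w i => swapc (σ i) (w i)
  have hS : ∀ σ, MeasurePreserving (S σ) Q Q := by
    intro σ
    refine measurePreserving_pi (fun _ => μ.prod μ) (fun _ => μ.prod μ)
      (f := fun i => swapc (σ i)) fun i => ?_
    cases h : σ i with
    | true =>
      have : (swapc true : Z × Z → Z × Z) = id := by ext p <;> simp [swapc]
      rw [this]; exact MeasurePreserving.id (μ.prod μ)
    | false =>
      have : (swapc false : Z × Z → Z × Z) = Prod.swap := by ext p <;> simp [swapc]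
      rw [this]; exact Measure.measurePreserving_swap
  have hSi : ∀ σ, ∫ w, Φ (S σ w) ∂Q = ∫ w, Φ w ∂Q := by
    intro σ
    conv_rhs => rw [← (hS σ).map_eq]
    rw [integral_map (hS σ).measurable.aemeasurable hΦm.aestronglyMeasurable]
  have hint : ∀ σ, Integrable (fun w => Φ (S σ w)) Q := fun σ =>
    Integrable.of_bound (hΦm.comp (hS σ).measurable).aestronglyMeasurable n
      (Filter.Eventually.of_forall fun w => hΦb _)
  have hpt : ∀ w, ∑ σ, Φ (S σ w) ≤ 2 ^ n * Real.sqrt (2 * n * L) := by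
    intro w
    obtain ⟨T, hTc, hT01, hTz⟩ := hT w
    choose τ hτT hτ using hTz
    have := massart_s6 hn T (fun t i => t (w i).2 - t (w i).1) (fun t ht i => by
      have h1 := hT01 t ht (w i).2; have h2 := hT01 t ht (w i).1
      rw [abs_le]; constructor <;> linarith [h1.1, h1.2, h2.1, h2.2])
      (fun σ => τ (fun i => (S σ w i).1)) (fun σ => hτT _) L hL hTc
    refine le_trans (le_of_eq ?_) this
    refine Finset.sum_congr rfl fun σ _ => Finset.sum_congr rfl fun i _ => ?_
    have h := hτ (fun i => (S σ w i).1) i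
    rw [h.1, h.2]
    cases hσ : σ i with
    | true =>
      have : S σ w i = w i := by simp [S, swapc, hσ]
      rw [this]; simp [sg]
    | false =>
      have : S σ w i = (w i).swap := by simp [S, swapc, hσ]
      rw [this]; simp [sg]
  have hfin : (2 : ℝ) ^ n * ∫ w, Φ w ∂Q ≤ 2 ^ n * Real.sqrt (2 * n * L) := by
    calc (2 : ℝ) ^ n * ∫ w, Φ w ∂Q = ∑ σ : Fin n → Bool, ∫ w, Φ (S σ w) ∂Q := by
          simp only [hSi]; simp
      _ = ∫ w, ∑ σ, Φ (S σ w) ∂Q := (integral_finsetSum _ fun σ _ => hint σ).symm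
      _ ≤ ∫ w, 2 ^ n * Real.sqrt (2 * n * L) ∂Q :=
          integral_mono (integrable_finsetSum _ fun σ _ => hint σ) (integrable_const _) hpt
      _ = _ := by simp
  exact le_of_mul_le_mul_left hfin (by positivity)

theorem joint_lintegral_univ {X : Type*} [MeasurableSpace X] {K : ℕ} (P : Measure X)
    [IsProbabilityMeasure P] (ηt : X → Fin K → ℝ) (hηt : ∀ x, ηt x ∈ simplex K)
    (hηtm : ∀ i, Measurable fun x => ηt x i) :
    IsProbabilityMeasure (jointMeasure P ηt) := by
  constructor
  unfold jointMeasure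
  rw [Measure.finsetSum_apply]
  have h : ∀ j : Fin K, ((P.withDensity fun x => ENNReal.ofReal (ηt x j)).map
      fun x => (x, j)) Set.univ = ∫⁻ x, ENNReal.ofReal (ηt x j) ∂P := by
    intro j
    rw [Measure.map_apply (by fun_prop) MeasurableSet.univ, Set.preimage_univ,
      withDensity_apply _ MeasurableSet.univ, Measure.restrict_univ]
  simp only [h]
  rw [← lintegral_finsetSum _ fun j _ => (hηtm j).ennreal_ofReal]
  have h2 : ∀ x, ∑ j, ENNReal.ofReal (ηt x j) = 1 := by
    intro x
    rw [← ENNReal.ofReal_sum_of_nonneg fun i _ => (hηt x).1 i, (hηt x).2, ENNReal.ofReal_one]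
  simp [h2]

/-- 0-1 loss -/
def loss {X : Type*} {K : ℕ} (f : X → Fin K) (p : X × Fin K) : ℝ := if f p.1 ≠ p.2 then 1 else 0

theorem loss_mem {X : Type*} {K : ℕ} (f : X → Fin K) (p : X × Fin K) :
    loss f p ∈ Set.Icc (0 : ℝ) 1 := by
  unfold loss; split_ifs <;> simp

theorem measurable_loss {X Y : Type*} [MeasurableSpace X] [MeasurableSpace Y] {K : ℕ}
    (f : Y → X → Fin K) (hf : Measurable fun p : Y × X => f p.1 p.2) :
    Measurable fun p : Y × (X × Fin K) => loss (f p.1) p.2 := by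
  unfold loss
  refine Measurable.ite (MeasurableSet.compl (measurableSet_eq_fun ?_ ?_)) measurable_const
    measurable_const
  · exact hf.comp (measurable_fst.prodMk (measurable_fst.comp measurable_snd))
  · exact measurable_snd.comp measurable_snd

theorem measurable_eta {X Y : Type*} [MeasurableSpace X] [MeasurableSpace Y] {K : ℕ}
    (η : X → Fin K → ℝ) (hηm : ∀ i, Measurable fun x => η x i)
    (f : Y → X → Fin K) (hf : Measurable fun p : Y × X => f p.1 p.2) :
    Measurable fun p : Y × X => η p.2 (f p.1 p.2) := by
  have h : Measurable fun q : X × Fin K => η q.1 q.2 :=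
    measurable_from_prod_countable_left fun j => hηm j
  exact h.comp (measurable_snd.prodMk hf)

theorem integral_loss {X : Type*} [MeasurableSpace X] {K : ℕ} (P : Measure X)
    [IsProbabilityMeasure P] (ηt : X → Fin K → ℝ) (hηt : ∀ x, ηt x ∈ simplex K)
    (hηtm : ∀ i, Measurable fun x => ηt x i) (f : X → Fin K) (hf : Measurable f) :
    ∫ y, loss f y ∂(jointMeasure P ηt) = risk P ηt f := by
  have hlm : Measurable (loss f) :=
    (measurable_loss (fun _ : Unit => f) (hf.comp measurable_snd)).comp
      (measurable_const.prodMk measurable_id : Measurable fun q : X × Fin K => ((), q))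
  have := joint_lintegral_univ P ηt hηt hηtm
  have hint : Integrable (loss f) (jointMeasure P ηt) :=
    Integrable.of_bound hlm.aestronglyMeasurable 1 (Filter.Eventually.of_forall fun y => by
      rw [Real.norm_eq_abs, abs_of_nonneg (loss_mem f y).1]; exact (loss_mem f y).2)
  have hle : ∀ x j, ηt x j ≤ 1 := fun x j => by
    rw [← (hηt x).2]
    exact Finset.single_le_sum (f := ηt x) (fun i _ => (hηt x).1 i) (Finset.mem_univ j)
  unfold jointMeasure at hint ⊢
  rw [integral_finsetSum_measure fun j _ => hint.mono_measure
    (Finset.single_le_sum (f := fun j => (P.withDensity fun x => ENNReal.ofReal (ηt x j)).map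
      fun x => (x, j)) (fun _ _ => Measure.zero_le _) (Finset.mem_univ j))]
  have h : ∀ j : Fin K, ∫ y, loss f y ∂((P.withDensity fun x => ENNReal.ofReal (ηt x j)).map
      fun x => (x, j)) = ∫ x, ηt x j * loss f (x, j) ∂P := by
    intro j
    rw [integral_map (by fun_prop) hlm.aestronglyMeasurable,
      integral_withDensity_eq_integral_toReal_smul (hηtm j).ennreal_ofReal
        (Filter.Eventually.of_forall fun x => ENNReal.ofReal_lt_top)]
    refine integral_congr_ae (Filter.Eventually.of_forall fun x => ?_)
    simp only [ENNReal.toReal_ofReal ((hηt x).1 j), smul_eq_mul]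
  simp only [h]
  rw [← integral_finsetSum]
  · unfold risk
    refine integral_congr_ae (Filter.Eventually.of_forall fun x => ?_)
    simp only
    have h1 : ∀ j, ηt x j * loss f (x, j) = ηt x j - if f x = j then ηt x j else 0 := by
      intro j; unfold loss; by_cases h : f x = j <;> simp [h]
    simp only [h1, Finset.sum_sub_distrib, (hηt x).2]
    simp
  · intro j _
    refine Integrable.of_bound ((hηtm j).mul (hlm.comp (by fun_prop))).aestronglyMeasurable 1
      (Filter.Eventually.of_forall fun x => ?_)
    have h1 := loss_mem f (x, j)
    have h2 := (hηt x).1 j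
    have h3 := hle x j
    rw [Real.norm_eq_abs, abs_of_nonneg (mul_nonneg h2 h1.1)]
    exact mul_le_one₀ h3 h1.1 h1.2

theorem card_patterns {X : Type*} {K V n : ℕ} (hK : 2 ≤ K) (hn : 1 ≤ n) (F : Set (X → Fin K))
    (hdim_le : ∀ C : Finset X, NShatters F C → C.card ≤ V)
    (w : Fin n → (X × Fin K) × (X × Fin K)) :
    ∃ H : Finset (X → Fin K),
      (H.card : ℝ) ≤ Real.exp (V * Real.log n + 4 * V * Real.log K + 1) ∧
      ∀ f ∈ F, ∃ h ∈ H, ∀ i, h (w i).1.1 = f (w i).1.1 ∧ h (w i).2.1 = f (w i).2.1 := by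
  classical
  let C : Finset X := Finset.univ.image (fun i => (w i).1.1) ∪ Finset.univ.image (fun i => (w i).2.1)
  have hC : C.card ≤ 2 * n := by
    refine (Finset.card_union_le _ _).trans ?_
    have h1 := Finset.card_image_le (s := Finset.univ) (f := fun i => (w i).1.1)
    have h2 := Finset.card_image_le (s := Finset.univ) (f := fun i => (w i).2.1)
    simp only [Finset.card_univ, Fintype.card_fin] at h1 h2
    omega
  obtain ⟨r, hrF, hrC, hreq, hfin⟩ := exists_reps F C
  refine ⟨hfin.toFinset, ?_, ?_⟩
  · have h1 : hfin.toFinset.card ≤ (1 + C.card * K ^ 2) ^ V := by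
      refine nat_lemma C V hfin.toFinset ?_ ?_
      · intro f hf g hg hfg
        rw [Set.Finite.mem_toFinset] at hf hg
        obtain ⟨f', hf', rfl⟩ := hf
        obtain ⟨g', hg', rfl⟩ := hg
        refine hreq f' hf' g' hg' fun x hx => ?_
        rw [← hrC f' hf' x hx, ← hrC g' hg' x hx]; exact hfg x hx
      · rintro S - ⟨g, h, hne, hv⟩
        refine hdim_le S ⟨g, h, hne, fun v hv' => ?_⟩
        obtain ⟨f, hf, hfx⟩ := hv v hv'
        rw [Set.Finite.coe_toFinset] at hf
        obtain ⟨f', hf', rfl⟩ := hf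
        exact ⟨r f', hrF f' hf', hfx⟩
    have h2 : 1 + C.card * K ^ 2 ≤ n * K ^ 4 := by
      have hK2 : 4 ≤ K ^ 2 := by nlinarith
      have h3 : 4 ≤ n * K ^ 2 := by nlinarith
      calc 1 + C.card * K ^ 2 ≤ n * K ^ 2 + 2 * n * K ^ 2 := by
            have := Nat.mul_le_mul_right (K ^ 2) hC
            omega
        _ ≤ 4 * (n * K ^ 2) := by nlinarith
        _ ≤ K ^ 2 * (n * K ^ 2) := Nat.mul_le_mul_right _ hK2
        _ = n * K ^ 4 := by ring
    have h3 : hfin.toFinset.card ≤ (n * K ^ 4) ^ V := h1.trans (Nat.pow_le_pow_left h2 V)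
    have hn0 : (0 : ℝ) < n := by exact_mod_cast hn
    have hK0 : (0 : ℝ) < K := by exact_mod_cast (by omega : 0 < K)
    have h4 : (((n * K ^ 4) ^ V : ℕ) : ℝ) = Real.exp (V * Real.log n + 4 * V * Real.log K) := by
      rw [show (V : ℝ) * Real.log n + 4 * V * Real.log K
        = V * (Real.log n + (4 : ℕ) * Real.log K) by push_cast; ring, Real.exp_nat_mul,
        Real.exp_add, Real.exp_nat_mul, Real.exp_log hn0, Real.exp_log hK0]
      push_cast; rfl
    calc (hfin.toFinset.card : ℝ) ≤ (((n * K ^ 4) ^ V : ℕ) : ℝ) := by exact_mod_cast h3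
      _ = _ := h4
      _ ≤ _ := Real.exp_le_exp.mpr (by linarith)
  · intro f hf
    refine ⟨r f, by rw [Set.Finite.mem_toFinset]; exact ⟨f, hf, rfl⟩, fun i => ⟨?_, ?_⟩⟩
    · exact hrC f hf _ (Finset.mem_union_left _ (Finset.mem_image_of_mem _ (Finset.mem_univ i)))
    · exact hrC f hf _ (Finset.mem_union_right _ (Finset.mem_image_of_mem _ (Finset.mem_univ i)))

theorem le_iSup_fin {K : ℕ} (v : Fin K → ℝ) (j : Fin K) : v j ≤ ⨆ i, v i :=
  le_ciSup (Set.finite_range v).bddAbove j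

theorem simplex_le_one_s6 {K : ℕ} {v : Fin K → ℝ} (hv : v ∈ simplex K) (j : Fin K) : v j ≤ 1 := by
  rw [← hv.2]
  exact Finset.single_le_sum (f := v) (fun i _ => hv.1 i) (Finset.mem_univ j)

theorem measurable_RSS {X : Type*} [MeasurableSpace X] {K : ℕ} (η ηt : X → Fin K → ℝ)
    (hηm : ∀ i, Measurable fun x => η x i) (hηtm : ∀ i, Measurable fun x => ηt x i) :
    Measurable fun x => RSS (η x) (ηt x) := by
  unfold RSS
  have h1 : Measurable fun x => ⨆ i, η x i := Measurable.iSup hηm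
  have h2 : Measurable fun x => ⨆ i, ηt x i := Measurable.iSup hηtm
  refine Measurable.iInf fun j => Measurable.ite ?_ measurable_const ?_
  · exact measurableSet_eq_fun (h1.sub (hηm j)) measurable_const
  · exact ((h2.sub (hηtm j)).div (h1.sub (hηm j))).ennreal_ofReal

theorem gap_le {K : ℕ} {η ηt : Fin K → ℝ} {κ : ℝ} (hκ : 0 < κ)
    (h : ENNReal.ofReal κ < RSS η ηt) (j : Fin K) :
    (⨆ i, η i) - η j ≤ 1 / κ * ((⨆ i, ηt i) - ηt j) := by
  have h1 := lt_of_lt_of_le h (iInf_le _ j)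
  have h2 := le_iSup_fin η j
  have h3 := le_iSup_fin ηt j
  by_cases h0 : (⨆ i, η i) - η j = 0
  · rw [h0]; exact mul_nonneg (by positivity) (by linarith)
  · rw [if_neg h0] at h1
    have h4 : 0 < (⨆ i, η i) - η j := lt_of_le_of_ne (by linarith) (Ne.symm h0)
    have h5 := (ENNReal.ofReal_lt_ofReal_iff_of_nonneg hκ.le).mp h1
    rw [lt_div_iff₀ h4] at h5
    rw [one_div, ← div_eq_inv_mul, le_div_iff₀ hκ]
    linarith

theorem excess_le {X : Type*} [MeasurableSpace X] {K : ℕ} (hK : 2 ≤ K) (P : Measure X)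
    [IsProbabilityMeasure P] (η ηt : X → Fin K → ℝ)
    (hη : ∀ x, η x ∈ simplex K) (hηt : ∀ x, ηt x ∈ simplex K)
    (hηm : ∀ i, Measurable fun x => η x i) (hηtm : ∀ i, Measurable fun x => ηt x i)
    (f : X → Fin K) (hf : Measurable f) {κ : ℝ} (hκ : 0 < κ) :
    risk P η f - bayesRisk P η ≤ (P {x | RSS (η x) (ηt x) ≤ ENNReal.ofReal κ}).toReal +
      1 / κ * (risk P ηt f - bayesRisk P ηt) := by
  have : Nonempty (Fin K) := ⟨⟨0, by omega⟩⟩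
  have aux : ∀ θ : X → Fin K → ℝ, (∀ x, θ x ∈ simplex K) → (∀ i, Measurable fun x => θ x i) →
      Integrable (fun x => (⨆ i, θ x i) - θ x (f x)) P ∧
      risk P θ f - bayesRisk P θ = ∫ x, ((⨆ i, θ x i) - θ x (f x)) ∂P := by
    intro θ hθ hθm
    have m1 : Measurable fun x => θ x (f x) :=
      (measurable_eta θ hθm (fun _ : Unit => f) (hf.comp measurable_snd)).comp
        (measurable_const.prodMk measurable_id : Measurable fun q : X => ((), q))
    have m2 : Measurable fun x => ⨆ i, θ x i := Measurable.iSup hθm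
    have b2 : ∀ x, (⨆ i, θ x i) ≤ 1 := fun x => ciSup_le fun i => simplex_le_one_s6 (hθ x) i
    have i1 : Integrable (fun x => θ x (f x)) P :=
      Integrable.of_bound m1.aestronglyMeasurable 1 (Filter.Eventually.of_forall fun x => by
        rw [Real.norm_eq_abs, abs_of_nonneg ((hθ x).1 _)]; exact simplex_le_one_s6 (hθ x) _)
    have i2 : Integrable (fun x => ⨆ i, θ x i) P :=
      Integrable.of_bound m2.aestronglyMeasurable 1 (Filter.Eventually.of_forall fun x => by
        rw [Real.norm_eq_abs, abs_of_nonneg (((hθ x).1 (f x)).trans (le_iSup_fin _ _))]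
        exact b2 x)
    refine ⟨i2.sub i1, ?_⟩
    unfold risk bayesRisk
    have j1 : Integrable (fun x => 1 - θ x (f x)) P := (integrable_const _).sub i1
    have j2 : Integrable (fun x => 1 - ⨆ i, θ x i) P := (integrable_const _).sub i2
    rw [← integral_sub j1 j2]
    refine integral_congr_ae (Filter.Eventually.of_forall fun x => ?_)
    simp only
    ring
  obtain ⟨i1, e1⟩ := aux η hη hηm
  obtain ⟨i2, e2⟩ := aux ηt hηt hηtm
  have hS : MeasurableSet {x | RSS (η x) (ηt x) ≤ ENNReal.ofReal κ} :=
    measurableSet_le (measurable_RSS η ηt hηm hηtm) measurable_const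
  rw [e1, e2]
  have h3 : (P {x | RSS (η x) (ηt x) ≤ ENNReal.ofReal κ}).toReal
      = ∫ x, Set.indicator {x | RSS (η x) (ηt x) ≤ ENNReal.ofReal κ} (fun _ => (1 : ℝ)) x ∂P := by
    rw [integral_indicator_const _ hS]; simp [Measure.real]
  have i3 : Integrable (Set.indicator {x | RSS (η x) (ηt x) ≤ ENNReal.ofReal κ}
      (fun _ => (1 : ℝ))) P := (integrable_const _).indicator hS
  rw [h3, ← integral_const_mul, ← integral_add i3 (i2.const_mul _)]
  refine integral_mono i1 (i3.add (i2.const_mul _)) fun x => ?_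
  have hb : 0 ≤ 1 / κ * ((⨆ i, ηt x i) - ηt x (f x)) :=
    mul_nonneg (by positivity) (by linarith [le_iSup_fin (ηt x) (f x)])
  by_cases hx : RSS (η x) (ηt x) ≤ ENNReal.ofReal κ
  · rw [Set.indicator_of_mem (by exact hx)]
    have : (⨆ i, η x i) ≤ 1 := ciSup_le fun i => simplex_le_one_s6 (hη x) i
    linarith [(hη x).1 (f x)]
  · rw [Set.indicator_of_notMem (by exact hx)]
    linarith [gap_le hκ (not_le.mp hx) (f x)]

theorem noisy_erm {X : Type*} [MeasurableSpace X] (K V n : ℕ) (hK : 2 ≤ K) (hn : 1 ≤ n)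
    (P : Measure X) [IsProbabilityMeasure P] (ηt : X → Fin K → ℝ)
    (hηt : ∀ x, ηt x ∈ simplex K) (hηtm : ∀ i, Measurable fun x => ηt x i)
    (F : Set (X → Fin K)) (hFm : ∀ f ∈ F, Measurable f)
    (hdim_le : ∀ C : Finset X, NShatters F C → C.card ≤ V)
    (hbayes : ∃ ftil ∈ F, ∀ x, ftil x ∈ argmaxSet (ηt x))
    (fhat : (Fin n → X × Fin K) → X → Fin K)
    (hmem : ∀ z, fhat z ∈ F)
    (hERM : ∀ z, ∀ f ∈ F,
      (Finset.univ.filter fun i => fhat z (z i).1 ≠ (z i).2).card ≤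
        (Finset.univ.filter fun i => f (z i).1 ≠ (z i).2).card)
    (hfhat : Measurable fun p : (Fin n → X × Fin K) × X => fhat p.1 p.2) :
    Integrable (fun z => risk P ηt (fhat z)) (Measure.pi fun _ : Fin n => jointMeasure P ηt) ∧
    (∫ z, (risk P ηt (fhat z) - bayesRisk P ηt)
        ∂(Measure.pi fun _ : Fin n => jointMeasure P ηt)) ≤
      16 * Real.sqrt ((V * Real.log n + 2 * V * Real.log K + 4) / (2 * n)) := by
  classical
  have := joint_lintegral_univ P ηt hηt hηtm
  set μ := jointMeasure P ηt with hμ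
  have hn0 : (0 : ℝ) < n := by exact_mod_cast hn
  have hlogn : 0 ≤ Real.log n := Real.log_nonneg (by exact_mod_cast hn)
  have hlogK : 0 ≤ Real.log K := Real.log_nonneg (by exact_mod_cast (by omega : 1 ≤ K))
  have hV : (0 : ℝ) ≤ V := Nat.cast_nonneg V
  have hVn := mul_nonneg hV hlogn
  have hVK := mul_nonneg hV hlogK
  set L : ℝ := V * Real.log n + 4 * V * Real.log K + 1 with hLdef
  have hL : 0 < L := by rw [hLdef]; nlinarith
  obtain ⟨ft, hftF, hft⟩ := hbayes
  have hlossm := measurable_loss fhat hfhat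
  have hsym := symmetrization_s6 μ hn (fun z => loss (fhat z)) hlossm
    (fun z y => loss_mem _ _) L hL (by
      intro w
      obtain ⟨H, hHc, hH⟩ := card_patterns hK hn F hdim_le w
      refine ⟨H.image loss, ?_, ?_, ?_⟩
      · refine le_trans ?_ hHc
        exact_mod_cast Finset.card_image_le
      · intro t ht y
        obtain ⟨h, -, rfl⟩ := Finset.mem_image.mp ht
        exact loss_mem _ _
      · intro z
        obtain ⟨h, hhH, hh⟩ := hH (fhat z) (hmem z)
        refine ⟨loss h, Finset.mem_image_of_mem _ hhH, fun i => ?_⟩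
        simp only [loss, (hh i).1, (hh i).2, and_self])
  simp only [integral_loss P ηt hηt hηtm _ (hFm _ (hmem _)), hμ] at hsym
  rw [← hμ] at hsym
  set Q := Measure.pi fun _ : Fin n => μ with hQ
  -- integrability
  have hrm : Measurable fun z => risk P ηt (fhat z) := by
    have h1 : Measurable fun p : (Fin n → X × Fin K) × X => 1 - ηt p.2 (fhat p.1 p.2) :=
      measurable_const.sub (measurable_eta ηt hηtm fhat hfhat)
    exact (h1.stronglyMeasurable.integral_prod_right (ν := P)).measurable
  have hri : Integrable (fun z => risk P ηt (fhat z)) Q := by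
    refine Integrable.of_bound hrm.aestronglyMeasurable 1 (Filter.Eventually.of_forall fun z => ?_)
    refine (norm_integral_le_of_norm_le_const (C := 1) (Filter.Eventually.of_forall fun x => ?_)).trans
      (by simp)
    rw [Real.norm_eq_abs, abs_le]
    constructor <;> linarith [(hηt x).1 (fhat z x), simplex_le_one_s6 (hηt x) (fhat z x)]
  refine ⟨hri, ?_⟩
  have hftm := hFm ft hftF
  have hftl : Measurable (loss ft) :=
    (measurable_loss (fun _ : Unit => ft) (hftm.comp measurable_snd)).comp
      (measurable_const.prodMk measurable_id : Measurable fun q : X × Fin K => ((), q))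
  have hei : ∀ i : Fin n, Integrable (fun z : Fin n → X × Fin K => loss ft (z i)) Q := fun i =>
    Integrable.of_bound (hftl.comp (measurable_pi_apply i)).aestronglyMeasurable 1
      (Filter.Eventually.of_forall fun z => by
        rw [Real.norm_eq_abs, abs_of_nonneg (loss_mem _ _).1]; exact (loss_mem _ _).2)
  have hei' : ∀ i : Fin n, Integrable (fun z : Fin n → X × Fin K => loss (fhat z) (z i)) Q :=
    fun i => Integrable.of_bound
      (hlossm.comp (measurable_id.prodMk (measurable_pi_apply i))).aestronglyMeasurable 1
      (Filter.Eventually.of_forall fun z => by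
        rw [Real.norm_eq_abs, abs_of_nonneg (loss_mem _ _).1]; exact (loss_mem _ _).2)
  have hbr : bayesRisk P ηt = risk P ηt ft := by
    unfold bayesRisk risk
    refine integral_congr_ae (Filter.Eventually.of_forall fun x => ?_)
    simp only
    have : ηt x (ft x) = ⨆ i, ηt x i := hft x
    rw [this]
  have hes : ∫ z, ∑ i, loss ft (z i) ∂Q = n * bayesRisk P ηt := by
    rw [integral_finsetSum _ fun i _ => hei i]
    have : ∀ i : Fin n, ∫ z, loss ft (z i) ∂Q = bayesRisk P ηt := by
      intro i
      have he := measurePreserving_eval (fun _ : Fin n => μ) i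
      rw [hbr, ← integral_loss P ηt hηt hηtm ft hftm, ← hμ]
      conv_rhs => rw [← he.map_eq]
      rw [integral_map he.measurable.aemeasurable hftl.aestronglyMeasurable]
    simp [this]
  have hmin : ∀ z : Fin n → X × Fin K, ∑ i, loss (fhat z) (z i) ≤ ∑ i, loss ft (z i) := by
    intro z
    have := hERM z ft hftF
    unfold loss
    rw [Finset.sum_boole, Finset.sum_boole]
    exact_mod_cast this
  have hkey : n * ∫ z, (risk P ηt (fhat z) - bayesRisk P ηt) ∂Q ≤ Real.sqrt (2 * n * L) := by
    refine le_trans ?_ hsym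
    have e1 : n * ∫ z, (risk P ηt (fhat z) - bayesRisk P ηt) ∂Q
        = ∫ z, (n * risk P ηt (fhat z) - ∑ i, loss ft (z i)) ∂Q := by
      rw [integral_sub (hri.const_mul _) (integrable_finsetSum _ fun i _ => hei i), hes,
        integral_sub hri (integrable_const _), integral_const_mul]
      simp
      ring
    rw [e1]
    refine integral_mono ((hri.const_mul _).sub (integrable_finsetSum _ fun i _ => hei i))
      ((hri.const_mul _).sub (integrable_finsetSum _ fun i _ => hei' i)) fun z => ?_
    have := hmin z
    simp only
    linarith
  refine le_of_mul_le_mul_left (hkey.trans ?_) hn0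
  have hB : (0 : ℝ) ≤ (V * Real.log n + 2 * V * Real.log K + 4) / (2 * n) := by
    apply div_nonneg <;> nlinarith
  refine Real.sqrt_le_iff.mpr ⟨by positivity, ?_⟩
  rw [mul_pow, mul_pow, Real.sq_sqrt hB]
  have : (n : ℝ) ^ 2 * (16 ^ 2 * ((V * Real.log n + 2 * V * Real.log K + 4) / (2 * n)))
      = 2 * n * (64 * (V * Real.log n + 2 * V * Real.log K + 4)) := by
    field_simp; ring
  rw [this]
  refine mul_le_mul_of_nonneg_left ?_ (by positivity)
  rw [hLdef]
  nlinarith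

/-- Excess risk upper bound for noise-ignorant ERM under the
`(ε, α, C_α)`-smooth relative signal margin condition:
`E[R(f̂) - R(f*)] ≤ ε + inf_{κ>0} {C_α κ^α + (1/κ)·16·√((V log n + 2V log K + 4)/(2n))}`. -/
theorem ni_erm_excess_risk_smooth_margin
    {X : Type*} [MeasurableSpace X] (K V n : ℕ) (hK : 2 ≤ K) (hn : 1 ≤ n)
    (ε α Cα : ℝ) (hε : ε ∈ Set.Icc (0 : ℝ) 1) (hα : 0 < α) (hCα : 0 < Cα)
    (P : Measure X) [IsProbabilityMeasure P]
    (η ηt : X → Fin K → ℝ)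
    (hη : ∀ x, η x ∈ simplex K) (hηt : ∀ x, ηt x ∈ simplex K)
    (hηm : ∀ i, Measurable fun x => η x i) (hηtm : ∀ i, Measurable fun x => ηt x i)
    (hmargin : ∀ κ : ℝ, 0 < κ →
      (P {x | RSS (η x) (ηt x) ≤ ENNReal.ofReal κ}).toReal ≤ Cα * κ ^ α + ε)
    (F : Set (X → Fin K)) (hFm : ∀ f ∈ F, Measurable f)
    (hdim_le : ∀ C : Finset X, NShatters F C → C.card ≤ V)
    (hdim_ex : ∃ C : Finset X, NShatters F C ∧ C.card = V)
    (hbayes : ∃ ftil ∈ F, ∀ x, ftil x ∈ argmaxSet (ηt x))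
    (fhat : (Fin n → X × Fin K) → X → Fin K)
    (hmem : ∀ z, fhat z ∈ F)
    (hERM : ∀ z, ∀ f ∈ F,
      (Finset.univ.filter fun i => fhat z (z i).1 ≠ (z i).2).card ≤
        (Finset.univ.filter fun i => f (z i).1 ≠ (z i).2).card)
    (hfhat : Measurable fun p : (Fin n → X × Fin K) × X => fhat p.1 p.2) :
    (∫ z, (risk P η (fhat z) - bayesRisk P η)
        ∂(Measure.pi fun _ : Fin n => jointMeasure P ηt)) ≤
      ε + ⨅ κ : {κ : ℝ // 0 < κ},
        (Cα * (κ : ℝ) ^ α + (1 / (κ : ℝ)) * 16 *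
          Real.sqrt ((V * Real.log n + 2 * V * Real.log K + 4) / (2 * n))) := by
  have := joint_lintegral_univ P ηt hηt hηtm
  obtain ⟨hri, hbound⟩ := noisy_erm K V n hK hn P ηt hηt hηtm F hFm hdim_le hbayes fhat hmem
    hERM hfhat
  have : Nonempty {κ : ℝ // 0 < κ} := ⟨⟨1, one_pos⟩⟩
  rw [← sub_le_iff_le_add']
  refine le_ciInf fun κ => ?_
  obtain ⟨κ, hκ⟩ := κ
  simp only
  have hrm : Measurable fun z => risk P η (fhat z) := by
    have h1 : Measurable fun p : (Fin n → X × Fin K) × X => 1 - η p.2 (fhat p.1 p.2) :=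
      measurable_const.sub (measurable_eta η hηm fhat hfhat)
    exact (h1.stronglyMeasurable.integral_prod_right (ν := P)).measurable
  have hri' : Integrable (fun z => risk P η (fhat z))
      (Measure.pi fun _ : Fin n => jointMeasure P ηt) := by
    refine Integrable.of_bound hrm.aestronglyMeasurable 1 (Filter.Eventually.of_forall fun z => ?_)
    refine (norm_integral_le_of_norm_le_const (C := 1) (Filter.Eventually.of_forall fun x => ?_)).trans
      (by simp)
    rw [Real.norm_eq_abs, abs_le]
    constructor <;> linarith [(hη x).1 (fhat z x), simplex_le_one_s6 (hη x) (fhat z x)]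
  have h1 : (∫ z, (risk P η (fhat z) - bayesRisk P η)
        ∂(Measure.pi fun _ : Fin n => jointMeasure P ηt)) ≤
      ∫ z, ((Cα * κ ^ α + ε) + 1 / κ * (risk P ηt (fhat z) - bayesRisk P ηt))
        ∂(Measure.pi fun _ : Fin n => jointMeasure P ηt) := by
    refine integral_mono (hri'.sub (integrable_const _))
      ((integrable_const _).add ((hri.sub (integrable_const _)).const_mul _)) fun z => ?_
    have h2 := excess_le hK P η ηt hη hηt hηm hηtm (fhat z) (hFm _ (hmem z)) hκ
    have h3 := hmargin κ hκ
    simp only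
    linarith
  have hj : Integrable (fun z => 1 / κ * (risk P ηt (fhat z) - bayesRisk P ηt))
      (Measure.pi fun _ : Fin n => jointMeasure P ηt) :=
    (hri.sub (integrable_const _)).const_mul _
  rw [integral_add (integrable_const _) hj,
    integral_const_mul] at h1
  simp only [integral_const, probReal_univ, one_smul] at h1
  have h4 := mul_le_mul_of_nonneg_left hbound (by positivity : 0 ≤ 1 / κ)
  rw [← mul_assoc] at h4
  linarith
end
end

section
/- (Multiclass VC-type inequality.) Let 𝒳 be a measurable space, K ≥ 2, and F a countable class of measurable classifiers f : 𝒳 → {1,…,K}. Let (X_1, Y_1),…,(X_n, Y_n) be i.i.d. draws from a probability measure P on 𝒳 × {1,…,K}. For f ∈ F let R(f) = P({(x,y) : f(x) ≠ y}) and R_n(f) = (1/n) Σ_{i=1}^n 1{f(X_i) ≠ Y_i}. Then for every n ≥ 1 and every ε > 0: P( sup_{f ∈ F} |R_n(f) − R(f)| > ε ) ≤ 8·S(F, n)·e^{−nε²/32}. -/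
open MeasureTheory

noncomputable section

/-- The `n`-th (multiclass) shatter coefficient `S(F, n)`: the maximum, over points
`x_1, …, x_n`, of the number of distinct value vectors `(f(x_1), …, f(x_n))`, `f ∈ F`. -/
def shatterCoeff {X : Type*} {K : ℕ} (F : Set (X → Fin K)) (n : ℕ) : ℕ :=
  sSup {m : ℕ | ∃ xs : Fin n → X,
    m = Nat.card {v : Fin n → Fin K // ∃ f ∈ F, ∀ i, f (xs i) = v i}}

open ProbabilityTheory in
/-- Chebyshev step. -/
lemma vcAux_cheb {Z : Type*} [MeasurableSpace Z] (P : Measure Z) [IsProbabilityMeasure P]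
    (n : ℕ) (hn : 1 ≤ n) (g : Z → ℝ) (hg : Measurable g) (h01 : ∀ z, g z ∈ Set.Icc (0 : ℝ) 1)
    (ε : ℝ) (hε : 0 < ε) (hlarge : 2 ≤ n * ε ^ 2) :
    (1 / 2 : ENNReal) ≤ (Measure.pi fun _ : Fin n => P)
      {z | |∑ i, g (z i) - n * ∫ p, g p ∂P| < n * ε / 2} := by
  set μ := Measure.pi fun _ : Fin n => P with hμ
  have hn0 : (0 : ℝ) < n := by exact_mod_cast hn
  have hmem : MemLp g 2 P := by
    refine MemLp.of_bound hg.aestronglyMeasurable 1 (Filter.Eventually.of_forall fun z => ?_)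
    rw [Real.norm_eq_abs, abs_of_nonneg (h01 z).1]; exact (h01 z).2
  have hint : Integrable g P := hmem.integrable (by norm_num)
  set S : (Fin n → Z) → ℝ := ∑ i : Fin n, fun z : Fin n → Z => g (z i) with hS
  have hSapp : ∀ z, S z = ∑ i, g (z i) := fun z => by simp [hS]
  have hSm : MemLp S 2 μ := memLp_finsetSum' _ fun i _ =>
    hmem.comp_measurePreserving (measurePreserving_eval (fun _ : Fin n => P) i)
  have hSi : μ[S] = n * ∫ p, g p ∂P := by
    simp_rw [hSapp]
    rw [integral_finsetSum]
    · have : ∀ i : Fin n, ∫ z, g (z i) ∂μ = ∫ p, g p ∂P := fun i => by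
        have := (measurePreserving_eval (fun _ : Fin n => P) i).map_eq
        have h := integral_map (μ := μ) (measurable_pi_apply i).aemeasurable
          (f := g) hg.aestronglyMeasurable
        rw [← h]
        exact congrArg (fun ν => ∫ p, g p ∂ν) this
      simp [this]
    · intro i _
      exact (measurePreserving_eval (fun _ : Fin n => P) i).integrable_comp_of_integrable hint
  have hvar : Var[S; μ] ≤ n / 4 := by
    rw [hS, hμ, variance_sum_pi (X := fun _ => g) (fun _ => hmem)]
    have := variance_le_sq_of_bounded (μ := P) (Filter.Eventually.of_forall h01) hg.aemeasurable
    simp only [Finset.sum_const, Finset.card_univ, Fintype.card_fin, nsmul_eq_mul]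
    nlinarith
  have hc : 0 < n * ε / 2 := by positivity
  have hcheb := meas_ge_le_variance_div_sq hSm hc
  have hle : Var[S; μ] / (n * ε / 2) ^ 2 ≤ 1 / 2 := by
    rw [div_le_iff₀ (by positivity)]
    nlinarith
  have h2 : μ {z | n * ε / 2 ≤ |S z - μ[S]|} ≤ 1 / 2 := by
    refine hcheb.trans ((ENNReal.ofReal_le_ofReal hle).trans ?_)
    rw [ENNReal.ofReal_div_of_pos (by norm_num)]; simp
  have hset : {z : Fin n → Z | |∑ i, g (z i) - n * ∫ p, g p ∂P| < n * ε / 2}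
      = {z | n * ε / 2 ≤ |S z - μ[S]|}ᶜ := by
    ext z; rw [hSi]; simp [hSapp]
  have hSmeas : Measurable S := by rw [hS]; fun_prop
  rw [hset, prob_compl_eq_one_sub (measurableSet_le measurable_const (by fun_prop))]
  calc (1 / 2 : ENNReal) = 1 - 1 / 2 := by simp
    _ ≤ _ := tsub_le_tsub_left h2 1

/-- Sign of a boolean. -/
def vcSgn (b : Bool) : ℝ := if b then 1 else -1

lemma vcAux_rad_one (n : ℕ) (hn : 1 ≤ n) (v : Fin n → ℝ) (hv : ∀ i, |v i| ≤ 1) (t : ℝ)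
    (ht : 0 < t) :
    ((Finset.univ.filter fun σ : Fin n → Bool => t < ∑ i, vcSgn (σ i) * v i).card : ℝ)
      ≤ 2 ^ n * Real.exp (-(t ^ 2) / (2 * n)) := by
  have hn0 : (0 : ℝ) < n := by exact_mod_cast hn
  set l := t / n with hl
  have hl0 : 0 < l := by positivity
  have hsum : ∑ σ : Fin n → Bool, Real.exp (l * ∑ i, vcSgn (σ i) * v i)
      ≤ 2 ^ n * Real.exp (n * l ^ 2 / 2) := by
    have h1 : ∀ σ : Fin n → Bool, Real.exp (l * ∑ i, vcSgn (σ i) * v i)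
        = ∏ i, Real.exp (l * (vcSgn (σ i) * v i)) := fun σ => by
      rw [Finset.mul_sum, Real.exp_sum]
    simp_rw [h1]
    rw [← Fintype.prod_sum (fun i b => Real.exp (l * (vcSgn b * v i)))]
    calc _ ≤ ∏ i : Fin n, (2 * Real.exp (l ^ 2 / 2)) := by
          refine Finset.prod_le_prod (fun i _ => by positivity) fun i _ => ?_
          have h2 := Real.cosh_le_exp_half_sq (l * v i)
          have h3 : Real.exp ((l * v i) ^ 2 / 2) ≤ Real.exp (l ^ 2 / 2) := by
            apply Real.exp_le_exp.2
            have : (v i) ^ 2 ≤ 1 := (sq_le_one_iff_abs_le_one _).2 (hv i)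
            nlinarith [sq_nonneg l]
          rw [Real.cosh_eq] at h2
          simp only [vcSgn, Fintype.univ_bool, Finset.mem_singleton, Bool.true_eq_false,
            not_false_eq_true, Finset.sum_insert, Finset.sum_singleton, if_true]
          simp only [Bool.false_eq_true, if_false, one_mul, neg_mul, mul_neg]
          linarith
      _ = _ := by
          rw [Finset.prod_const, mul_pow, ← Real.exp_nat_mul]
          simp only [Finset.card_univ, Fintype.card_fin]
          ring_nf
  have hmk : ((Finset.univ.filter fun σ : Fin n → Bool => t < ∑ i, vcSgn (σ i) * v i).card : ℝ)
      * Real.exp (l * t) ≤ ∑ σ : Fin n → Bool, Real.exp (l * ∑ i, vcSgn (σ i) * v i) := by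
    rw [← nsmul_eq_mul, ← Finset.sum_const]
    refine (Finset.sum_le_sum fun σ hσ => ?_).trans
      (Finset.sum_le_sum_of_subset_of_nonneg (Finset.filter_subset _ _) fun _ _ _ => by positivity)
    rw [Finset.mem_filter] at hσ
    exact Real.exp_le_exp.2 (mul_le_mul_of_nonneg_left hσ.2.le hl0.le)
  have h4 : -(t ^ 2) / (2 * n) = n * l ^ 2 / 2 - l * t := by
    rw [hl]; field_simp; ring
  rw [h4, Real.exp_sub, ← mul_div_assoc, le_div_iff₀ (Real.exp_pos _)]
  exact hmk.trans hsum

lemma vcAux_rad_two (n : ℕ) (hn : 1 ≤ n) (v : Fin n → ℝ) (hv : ∀ i, |v i| ≤ 1) (t : ℝ)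
    (ht : 0 < t) :
    ((Finset.univ.filter fun σ : Fin n → Bool => t < |∑ i, vcSgn (σ i) * v i|).card : ℝ)
      ≤ 2 * (2 ^ n * Real.exp (-(t ^ 2) / (2 * n))) := by
  have h1 := vcAux_rad_one n hn v hv t ht
  have h2 := vcAux_rad_one n hn (fun i => - v i) (by simpa using hv) t ht
  have h3 : (Finset.univ.filter fun σ : Fin n → Bool => t < |∑ i, vcSgn (σ i) * v i|)
      ⊆ (Finset.univ.filter fun σ : Fin n → Bool => t < ∑ i, vcSgn (σ i) * v i) ∪
        (Finset.univ.filter fun σ : Fin n → Bool => t < ∑ i, vcSgn (σ i) * - v i) := by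
    intro σ hσ
    simp only [Finset.mem_filter, Finset.mem_univ, true_and, Finset.mem_union, mul_neg,
      Finset.sum_neg_distrib] at hσ ⊢
    exact lt_abs.1 hσ
  have h4 := (Finset.card_le_card h3).trans (Finset.card_union_le _ _)
  have h5 : ((Finset.univ.filter fun σ : Fin n → Bool =>
      t < |∑ i, vcSgn (σ i) * v i|).card : ℝ) ≤ _ := Nat.cast_le.2 h4
  push_cast at h5
  linarith

open Classical in
lemma vcAux_rad_class {ι : Type*} (n : ℕ) (hn : 1 ≤ n) (g : ι → Fin n → ℝ)
    (hg : ∀ f i, |g f i| ≤ 1) (N : ℕ) (V : Finset (Fin n → ℝ)) (hV : V.card ≤ N)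
    (hgV : ∀ f, g f ∈ V) (t : ℝ) (ht : 0 < t) :
    ((Finset.univ.filter fun σ : Fin n → Bool =>
        ∃ f, t < |∑ i, vcSgn (σ i) * g f i|).card : ℝ)
      ≤ N * (2 * (2 ^ n * Real.exp (-(t ^ 2) / (2 * n)))) := by
  set W := V.filter fun v => ∀ i, |v i| ≤ 1 with hW
  have h1 : (Finset.univ.filter fun σ : Fin n → Bool => ∃ f, t < |∑ i, vcSgn (σ i) * g f i|)
      ⊆ W.biUnion fun v => Finset.univ.filter fun σ : Fin n → Bool =>
        t < |∑ i, vcSgn (σ i) * v i| := by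
    intro σ hσ
    simp only [Finset.mem_filter, Finset.mem_univ, true_and, Finset.mem_biUnion, hW] at hσ ⊢
    obtain ⟨f, hf⟩ := hσ
    exact ⟨g f, ⟨hgV f, hg f⟩, hf⟩
  have h2 := (Finset.card_le_card h1).trans Finset.card_biUnion_le
  have h3 : ((Finset.univ.filter fun σ : Fin n → Bool =>
        ∃ f, t < |∑ i, vcSgn (σ i) * g f i|).card : ℝ) ≤ _ := Nat.cast_le.2 h2
  push_cast at h3
  refine h3.trans ?_
  refine (Finset.sum_le_card_nsmul _ _ (2 * (2 ^ n * Real.exp (-(t ^ 2) / (2 * n))))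
    fun v hv => vcAux_rad_two n hn v (Finset.mem_filter.1 hv).2 t ht).trans ?_
  rw [nsmul_eq_mul]
  refine mul_le_mul_of_nonneg_right ?_ (by positivity)
  exact_mod_cast (Finset.card_filter_le _ _).trans hV

/-- Symmetrization by a ghost sample. -/
lemma vcAux_symm {Z ι : Type*} [MeasurableSpace Z] [Countable ι] (P : Measure Z)
    [IsProbabilityMeasure P]
    (n : ℕ) (hn : 1 ≤ n) (g : ι → Z → ℝ) (hg : ∀ f, Measurable (g f))
    (h01 : ∀ f z, g f z ∈ Set.Icc (0 : ℝ) 1)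
    (ε : ℝ) (hε : 0 < ε) (hlarge : 2 ≤ n * ε ^ 2) :
    (Measure.pi fun _ : Fin n => P) {z | ∃ f, n * ε < |∑ i, g f (z i) - n * ∫ p, g f p ∂P|}
      ≤ 2 * (Measure.pi fun _ : Fin n => P.prod P)
        {w | ∃ f, n * ε / 2 < |∑ i, (g f (w i).1 - g f (w i).2)|} := by
  set μ := Measure.pi fun _ : Fin n => P with hμ
  set B : Set ((Fin n → Z) × (Fin n → Z)) :=
    {w | ∃ f, n * ε / 2 < |∑ i, (g f (w.1 i) - g f (w.2 i))|} with hB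
  have hBm : MeasurableSet B := by
    rw [hB, Set.ofPred_exists]
    exact MeasurableSet.iUnion fun f => measurableSet_lt measurable_const (by fun_prop)
  have hmp := measurePreserving_arrowProdEquivProdArrow Z Z (Fin n) (fun _ => P) (fun _ => P)
  have h1 : (Measure.pi fun _ : Fin n => P.prod P)
        {w | ∃ f, n * ε / 2 < |∑ i, (g f (w i).1 - g f (w i).2)|} = (μ.prod μ) B := by
    rw [← hmp.measure_preimage hBm.nullMeasurableSet]
    rfl
  rw [h1, Measure.prod_apply hBm]
  have h2 : (1 / 2 : ENNReal) * μ {z | ∃ f, n * ε < |∑ i, g f (z i) - n * ∫ p, g f p ∂P|}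
      ≤ ∫⁻ z, μ (Prod.mk z ⁻¹' B) ∂μ := by
    refine le_trans ?_ (mul_meas_ge_le_lintegral (measurable_measure_prodMk_left hBm) (1 / 2))
    refine mul_le_mul_right (measure_mono ?_) _
    rintro z ⟨f, hf⟩
    refine (vcAux_cheb P n hn (g f) (hg f) (h01 f) ε hε hlarge).trans (measure_mono ?_)
    intro z' hz'
    refine ⟨f, ?_⟩
    simp only [Set.mem_ofPred_eq] at hz' ⊢
    rw [Finset.sum_sub_distrib]
    have := abs_sub_le (∑ i, g f (z i)) (∑ i, g f (z' i)) (n * ∫ p, g f p ∂P)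
    linarith
  calc _ = 2 * ((1 / 2 : ENNReal) * μ {z | ∃ f, n * ε < |∑ i, g f (z i) - n * ∫ p, g f p ∂P|}) := by
        rw [← mul_assoc, one_div, ENNReal.mul_inv_cancel (by simp) (by simp), one_mul]
    _ ≤ _ := by gcongr

/-- Introducing random signs. -/
lemma vcAux_sign {Z ι : Type*} [MeasurableSpace Z] [Countable ι] (P : Measure Z)
    [IsProbabilityMeasure P]
    (n : ℕ) (g : ι → Z → ℝ) (hg : ∀ f, Measurable (g f)) (s : ℝ) (σ : Fin n → Bool) :
    (Measure.pi fun _ : Fin n => P.prod P)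
        {w | ∃ f, 2 * s < |∑ i, (g f (w i).1 - g f (w i).2)|}
      ≤ 2 * (Measure.pi fun _ : Fin n => P) {z | ∃ f, s < |∑ i, vcSgn (σ i) * g f (z i)|} := by
  set C : Set (Fin n → Z) := {z | ∃ f, s < |∑ i, vcSgn (σ i) * g f (z i)|} with hC
  have hCm : MeasurableSet C := by
    rw [hC, Set.ofPred_exists]
    exact MeasurableSet.iUnion fun f => measurableSet_lt measurable_const (by fun_prop)
  have hBm : MeasurableSet {w : Fin n → Z × Z |
      ∃ f, 2 * s < |∑ i, (g f (w i).1 - g f (w i).2)|} := by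
    rw [Set.ofPred_exists]
    exact MeasurableSet.iUnion fun f => measurableSet_lt measurable_const (by fun_prop)
  have hT : MeasurePreserving (fun (w : Fin n → Z × Z) i => if σ i then w i else (w i).swap)
      (Measure.pi fun _ : Fin n => P.prod P) (Measure.pi fun _ : Fin n => P.prod P) := by
    refine measurePreserving_pi (fun _ : Fin n => P.prod P) (fun _ : Fin n => P.prod P)
      (f := fun i p => if σ i then p else p.swap) fun i => ?_
    cases σ i
    · simpa using Measure.measurePreserving_swap (μ := P) (ν := P)
    · exact MeasurePreserving.id (P.prod P)
  have hfst : MeasurePreserving (fun (w : Fin n → Z × Z) i => (w i).1)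
      (Measure.pi fun _ : Fin n => P.prod P) (Measure.pi fun _ : Fin n => P) :=
    measurePreserving_pi (fun _ : Fin n => P.prod P) (fun _ : Fin n => P)
      (f := fun _ => Prod.fst) fun i => measurePreserving_fst
  have hsnd : MeasurePreserving (fun (w : Fin n → Z × Z) i => (w i).2)
      (Measure.pi fun _ : Fin n => P.prod P) (Measure.pi fun _ : Fin n => P) :=
    measurePreserving_pi (fun _ : Fin n => P.prod P) (fun _ : Fin n => P)
      (f := fun _ => Prod.snd) fun i => measurePreserving_snd
  rw [← hT.measure_preimage hBm.nullMeasurableSet, two_mul (Measure.pi _ C)]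
  nth_rewrite 1 [← hfst.measure_preimage hCm.nullMeasurableSet]
  rw [← hsnd.measure_preimage hCm.nullMeasurableSet]
  refine (measure_mono ?_).trans (measure_union_le _ _)
  rintro w ⟨f, hf⟩
  have h1 : ∑ i, (g f (if σ i then w i else (w i).swap).1
        - g f (if σ i then w i else (w i).swap).2)
      = ∑ i, vcSgn (σ i) * g f (w i).1 - ∑ i, vcSgn (σ i) * g f (w i).2 := by
    rw [← Finset.sum_sub_distrib]
    refine Finset.sum_congr rfl fun i _ => ?_
    cases σ i <;> simp [vcSgn]
    ring
  simp only [h1] at hf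
  by_contra hcon
  simp only [Set.mem_union, Set.mem_preimage, hC, Set.mem_ofPred_eq, not_or, not_exists,
    not_lt] at hcon
  have := abs_sub (∑ i, vcSgn (σ i) * g f (w i).1) (∑ i, vcSgn (σ i) * g f (w i).2)
  linarith [hcon.1 f, hcon.2 f]

open Classical in
lemma vcAux_main {Z ι : Type*} [MeasurableSpace Z] [Countable ι] (P : Measure Z)
    [IsProbabilityMeasure P]
    (n : ℕ) (hn : 1 ≤ n) (g : ι → Z → ℝ) (hg : ∀ f, Measurable (g f))
    (h01 : ∀ f z, g f z ∈ Set.Icc (0 : ℝ) 1) (N : ℕ)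
    (hN : ∀ z : Fin n → Z, ∃ V : Finset (Fin n → ℝ), V.card ≤ N ∧
      ∀ f, (fun i => g f (z i)) ∈ V)
    (ε : ℝ) (hε : 0 < ε) (hlarge : 2 ≤ n * ε ^ 2) :
    (Measure.pi fun _ : Fin n => P) {z | ∃ f, n * ε < |∑ i, g f (z i) - n * ∫ p, g f p ∂P|}
      ≤ ENNReal.ofReal (8 * N * Real.exp (-((n : ℝ) * ε ^ 2) / 32)) := by
  have hn0 : (0 : ℝ) < n := by exact_mod_cast hn
  set μ := Measure.pi fun _ : Fin n => P with hμ
  set M := μ {z | ∃ f, n * ε < |∑ i, g f (z i) - n * ∫ p, g f p ∂P|} with hM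
  set C : (Fin n → Bool) → Set (Fin n → Z) :=
    fun σ => {z | ∃ f, n * ε / 4 < |∑ i, vcSgn (σ i) * g f (z i)|} with hC
  have hCm : ∀ σ, MeasurableSet (C σ) := fun σ => by
    simp only [hC, Set.ofPred_exists]
    exact MeasurableSet.iUnion fun f => measurableSet_lt measurable_const (by fun_prop)
  have h1 : ∀ σ, M ≤ 4 * μ (C σ) := fun σ => by
    refine (vcAux_symm P n hn g hg h01 ε hε hlarge).trans ?_
    have := vcAux_sign P n g hg (n * ε / 4) σ
    rw [show 2 * (n * ε / 4) = n * ε / 2 by ring] at this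
    calc _ ≤ 2 * (2 * μ (C σ)) := by gcongr
      _ = _ := by rw [← mul_assoc]; norm_num
  set E := Real.exp (-((n : ℝ) * ε ^ 2) / 32) with hE
  have h2 : ∑ σ, μ (C σ) ≤ ENNReal.ofReal (N * (2 * (2 ^ n * E))) := by
    calc ∑ σ, μ (C σ) = ∑ σ, ∫⁻ z, (C σ).indicator 1 z ∂μ := by
          simp_rw [lintegral_indicator_one (hCm _)]
      _ = ∫⁻ z, ∑ σ, (C σ).indicator 1 z ∂μ := by
          rw [lintegral_finsetSum]
          exact fun σ _ => measurable_one.indicator (hCm σ)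
      _ ≤ ∫⁻ z, ENNReal.ofReal (N * (2 * (2 ^ n * E))) ∂μ := by
          refine lintegral_mono fun z => ?_
          obtain ⟨V, hV, hVz⟩ := hN z
          have h3 := vcAux_rad_class n hn (fun f i => g f (z i))
            (fun f i => by rw [abs_of_nonneg (h01 f _).1]; exact (h01 f _).2) N V hV hVz
            (n * ε / 4) (by positivity)
          rw [show -((n * ε / 4) ^ 2) / (2 * n) = -((n : ℝ) * ε ^ 2) / 32 by
            field_simp; ring] at h3
          have h4 : ∑ σ, (C σ).indicator (1 : (Fin n → Z) → ENNReal) z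
            = ((Finset.univ.filter fun σ : Fin n → Bool =>
              ∃ f, n * ε / 4 < |∑ i, vcSgn (σ i) * g f (z i)|).card : ENNReal) := by
            rw [Finset.card_filter]
            push_cast
            refine Finset.sum_congr rfl fun σ _ => ?_
            simp [Set.indicator_apply, hC]
          simp only [h4]
          rw [← ENNReal.ofReal_natCast]
          exact ENNReal.ofReal_le_ofReal h3
      _ = _ := by simp
  have h5 : (2 : ENNReal) ^ n * M ≤ 2 ^ n * ENNReal.ofReal (8 * N * E) := by
    calc (2 : ENNReal) ^ n * M = ∑ σ : Fin n → Bool, M := by simp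
      _ ≤ ∑ σ, 4 * μ (C σ) := Finset.sum_le_sum fun σ _ => h1 σ
      _ = 4 * ∑ σ, μ (C σ) := by rw [Finset.mul_sum]
      _ ≤ 4 * ENNReal.ofReal (N * (2 * (2 ^ n * E))) := by gcongr
      _ = ENNReal.ofReal 4 * ENNReal.ofReal (N * (2 * (2 ^ n * E))) := by norm_num
      _ = ENNReal.ofReal (2 ^ n) * ENNReal.ofReal (8 * N * E) := by
          rw [← ENNReal.ofReal_mul (by norm_num), ← ENNReal.ofReal_mul (by positivity)]
          congr 1; ring
      _ = _ := by rw [ENNReal.ofReal_pow (by norm_num)]; norm_num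
  exact (ENNReal.mul_le_mul_iff_right (by simp) (by simp)).1 h5

lemma vcAux_bdd {X : Type*} {K : ℕ} (F : Set (X → Fin K)) (n : ℕ) :
    BddAbove {m : ℕ | ∃ xs : Fin n → X,
      m = Nat.card {v : Fin n → Fin K // ∃ f ∈ F, ∀ i, f (xs i) = v i}} := by
  refine ⟨Nat.card (Fin n → Fin K), ?_⟩
  rintro m ⟨xs, rfl⟩
  exact Finite.card_subtype_le _

lemma vcAux_le_shatter {X : Type*} {K : ℕ} (F : Set (X → Fin K)) (n : ℕ) (xs : Fin n → X) :
    Nat.card {v : Fin n → Fin K // ∃ f ∈ F, ∀ i, f (xs i) = v i} ≤ shatterCoeff F n :=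
  le_csSup (vcAux_bdd F n) ⟨xs, rfl⟩

/-- Multiclass VC-type inequality: for a countable class `F` of measurable classifiers
and an i.i.d. sample of size `n ≥ 1` from `P`,
`P(sup_{f ∈ F} |R_n(f) - R(f)| > ε) ≤ 8 S(F, n) e^{-nε²/32}`. -/
theorem multiclass_vc_inequality
    {X : Type*} [MeasurableSpace X] (K n : ℕ) (hK : 2 ≤ K) (hn : 1 ≤ n)
    (F : Set (X → Fin K)) (hFc : F.Countable) (hFm : ∀ f ∈ F, Measurable f)
    (P : Measure (X × Fin K)) [IsProbabilityMeasure P]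
    (ε : ℝ) (hε : 0 < ε) :
    ((Measure.pi fun _ : Fin n => P)
        {z | ∃ f ∈ F,
          ε < |((Finset.univ.filter fun i => f (z i).1 ≠ (z i).2).card : ℝ) / n -
                (P {p : X × Fin K | f p.1 ≠ p.2}).toReal|}).toReal ≤
      8 * (shatterCoeff F n : ℝ) * Real.exp (-((n : ℝ) * ε ^ 2) / 32) := by
  classical
  have hn0 : (0 : ℝ) < n := by exact_mod_cast hn
  rcases F.eq_empty_or_nonempty with hF | ⟨f0, hf0⟩
  · subst hF
    simp only [Set.mem_empty_iff_false, false_and, exists_false, Set.ofPred_false, measure_empty,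
      ENNReal.toReal_zero]
    positivity
  by_cases hlarge : 2 ≤ n * ε ^ 2
  swap
  · have hne : Nonempty (X × Fin K) := nonempty_of_isProbabilityMeasure P
    obtain ⟨x0, _⟩ := hne
    have hS : 1 ≤ shatterCoeff F n := by
      refine le_trans ?_ (vcAux_le_shatter F n fun _ => x0)
      have : Nonempty {v : Fin n → Fin K // ∃ f ∈ F, ∀ i, f x0 = v i} :=
        ⟨⟨fun _ => f0 x0, f0, hf0, fun _ => rfl⟩⟩
      exact Nat.card_pos
    have hS' : (1 : ℝ) ≤ shatterCoeff F n := by exact_mod_cast hS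
    have hE : (1 / 2 : ℝ) ≤ Real.exp (-((n : ℝ) * ε ^ 2) / 32) := by
      have := Real.add_one_le_exp (-((n : ℝ) * ε ^ 2) / 32)
      linarith
    have h1 : ((Measure.pi fun _ : Fin n => P)
        {z | ∃ f ∈ F,
          ε < |((Finset.univ.filter fun i => f (z i).1 ≠ (z i).2).card : ℝ) / n -
                (P {p : X × Fin K | f p.1 ≠ p.2}).toReal|}).toReal ≤ 1 := measureReal_le_one
    refine h1.trans ?_
    nlinarith
  have : Countable F := hFc.to_subtype
  have hsm : ∀ f : F, MeasurableSet {p : X × Fin K | f.1 p.1 ≠ p.2} := fun f => by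
    have := hFm f.1 f.2
    exact (measurableSet_eq_fun (this.comp measurable_fst) measurable_snd).compl
  set g : F → X × Fin K → ℝ := fun f => {p : X × Fin K | f.1 p.1 ≠ p.2}.indicator 1 with hg
  have hmain := vcAux_main P n hn g (fun f => measurable_one.indicator (hsm f))
    (fun f z => by
      by_cases h : f.1 z.1 = z.2 <;> simp [hg, h])
    (shatterCoeff F n) (fun z => by
      have hfin : Set.Finite {v : Fin n → Fin K | ∃ f ∈ F, ∀ i, f (z i).1 = v i} :=
        Set.toFinite _
      refine ⟨hfin.toFinset.image fun v i => if v i = (z i).2 then 0 else 1, ?_, ?_⟩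
      · refine Finset.card_image_le.trans ?_
        rw [← Nat.card_eq_card_finite_toFinset hfin]
        exact vcAux_le_shatter F n fun i => (z i).1
      · intro f
        rw [Finset.mem_image]
        refine ⟨fun i => f.1 (z i).1, ?_, ?_⟩
        · simpa using ⟨f.1, f.2, fun _ => rfl⟩
        · ext i
          by_cases h : f.1 (z i).1 = (z i).2 <;> simp [hg, h])
    ε hε hlarge
  refine ENNReal.toReal_le_of_le_ofReal (by positivity) (le_trans (measure_mono ?_) hmain)
  rintro z ⟨f, hf, hz⟩
  refine ⟨⟨f, hf⟩, ?_⟩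
  have h1 : ∑ i, g ⟨f, hf⟩ (z i)
      = ((Finset.univ.filter fun i => f (z i).1 ≠ (z i).2).card : ℝ) := by
    rw [Finset.card_filter]
    push_cast
    refine Finset.sum_congr rfl fun i _ => ?_
    simp [hg, Set.indicator_apply]
  have h2 : ∫ p, g ⟨f, hf⟩ p ∂P = (P {p : X × Fin K | f p.1 ≠ p.2}).toReal := by
    rw [hg]; exact integral_indicator_one (hsm ⟨f, hf⟩)
  rw [h1, h2]
  have h3 : ((Finset.univ.filter fun i => f (z i).1 ≠ (z i).2).card : ℝ)
      - n * (P {p : X × Fin K | f p.1 ≠ p.2}).toReal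
      = n * (((Finset.univ.filter fun i => f (z i).1 ≠ (z i).2).card : ℝ) / n -
                (P {p : X × Fin K | f p.1 ≠ p.2}).toReal) := by
    field_simp
  rw [h3, abs_mul, abs_of_pos hn0]
  exact mul_lt_mul_of_pos_left hz hn0
end
end

section
/- (Expected excess risk of ERM via the shatter coefficient.) Let 𝒳 be a measurable space, K ≥ 2, and F a countable class of measurable classifiers f : 𝒳 → {1,…,K}. Let (X_1, Y_1),…,(X_n, Y_n) be i.i.d. draws from a probability measure P on 𝒳 × {1,…,K}, let R(f) = P({(x,y) : f(x) ≠ y}), and suppose some f° ∈ F attains inf_{f ∈ F} R(f). Let f̂ ∈ argmin_{f ∈ F} (1/n) Σ_{i=1}^n 1{f(X_i) ≠ Y_i} be an empirical risk minimizer (assumed to exist and be suitably measurable). Then E[ R(f̂) − R(f°) ] ≤ 16·√( log(8e·S(F, n)) / (2n) ). -/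
open MeasureTheory

noncomputable section

def ermSg (b : Bool) : ℝ := if b then 1 else -1

def ermLoss {X : Type*} {K : ℕ} (f : X → Fin K) (p : X × Fin K) : ℝ :=
  if f p.1 ≠ p.2 then 1 else 0

/-- The symmetrized supremum. -/
def ermD {X : Type*} {K n : ℕ} (F : Set (X → Fin K)) (σ : Fin n → Bool)
    (w : Fin n → (X × Fin K) × (X × Fin K)) : ℝ :=
  ⨆ f : F, ∑ i, ermSg (σ i) * (ermLoss f.1 (w i).2 - ermLoss f.1 (w i).1)

lemma ermLoss_nonneg {X : Type*} {K : ℕ} (f : X → Fin K) (p : X × Fin K) : 0 ≤ ermLoss f p := by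
  unfold ermLoss; split_ifs <;> norm_num

lemma ermLoss_le {X : Type*} {K : ℕ} (f : X → Fin K) (p : X × Fin K) : ermLoss f p ≤ 1 := by
  unfold ermLoss; split_ifs <;> norm_num

lemma ermLoss_sum {X : Type*} {K n : ℕ} (f : X → Fin K) (z : Fin n → X × Fin K) :
    ∑ i, ermLoss f (z i) = ((Finset.univ.filter fun i => f (z i).1 ≠ (z i).2).card : ℝ) := by
  unfold ermLoss
  rw [Finset.sum_boole]

lemma erm_massart {n : ℕ} {ι : Type*} (T : Finset ι) (c : ι → Fin n → ℝ)
    (hc : ∀ t i, |c t i| ≤ 1) (D : (Fin n → Bool) → ℝ)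
    (hD : ∀ σ, ∃ t ∈ T, D σ = ∑ i, ermSg (σ i) * c t i) (N : ℝ) (hN : 0 < N)
    (hT : (T.card : ℝ) ≤ N) (l : ℝ) (hl : 0 < l) :
    ∑ σ, D σ ≤ 2 ^ n * ((Real.log N + l ^ 2 * n / 2) / l) := by
  set C := N * Real.exp (l ^ 2 * n / 2) with hC
  have hCpos : 0 < C := by positivity
  have hlogC : Real.log C = Real.log N + l ^ 2 * n / 2 := by
    rw [hC, Real.log_mul hN.ne' (Real.exp_pos _).ne', Real.log_exp]
  have h1 : ∀ σ, l * D σ ≤ Real.log C - 1 + Real.exp (l * D σ) / C := by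
    intro σ
    have := Real.add_one_le_exp (l * D σ - Real.log C)
    rw [Real.exp_sub, Real.exp_log hCpos] at this
    linarith
  have h2 : ∀ σ, Real.exp (l * D σ) ≤ ∑ t ∈ T, ∏ i, Real.exp (l * (ermSg (σ i) * c t i)) := by
    intro σ
    obtain ⟨t, ht, h⟩ := hD σ
    rw [h, Finset.mul_sum, Real.exp_sum]
    exact Finset.single_le_sum (f := fun t => ∏ i, Real.exp (l * (ermSg (σ i) * c t i)))
      (fun t _ => Finset.prod_nonneg fun i _ => (Real.exp_pos _).le) ht
  have h3 : ∀ t, ∑ σ : Fin n → Bool, ∏ i, Real.exp (l * (ermSg (σ i) * c t i))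
      ≤ 2 ^ n * Real.exp (l ^ 2 * n / 2) := by
    intro t
    have e : ∑ σ : Fin n → Bool, ∏ i, Real.exp (l * (ermSg (σ i) * c t i))
        = ∏ i, ∑ b : Bool, Real.exp (l * (ermSg b * c t i)) := by
      rw [Finset.prod_univ_sum, Fintype.piFinset_univ]
    rw [e]
    have : ∀ i, ∑ b : Bool, Real.exp (l * (ermSg b * c t i)) ≤ 2 * Real.exp (l ^ 2 / 2) := by
      intro i
      have h := Real.cosh_le_exp_half_sq (l * c t i)
      rw [Real.cosh_eq] at h
      have hsq : (c t i) ^ 2 ≤ 1 := by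
        rw [← sq_abs]; have := hc t i; have := abs_nonneg (c t i); nlinarith
      have h4 : Real.exp ((l * c t i) ^ 2 / 2) ≤ Real.exp (l ^ 2 / 2) := by
        apply Real.exp_le_exp.2
        rw [mul_pow]
        nlinarith [sq_nonneg l]
      simp only [Fintype.sum_bool, ermSg]
      simp only [if_true, one_mul, Bool.false_eq_true, if_false, neg_mul, mul_neg]
      linarith
    calc _ ≤ ∏ i : Fin n, (2 * Real.exp (l ^ 2 / 2)) :=
          Finset.prod_le_prod (fun i _ => Finset.sum_nonneg fun b _ => (Real.exp_pos _).le)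
            (fun i _ => this i)
      _ = 2 ^ n * Real.exp (l ^ 2 * n / 2) := by
          rw [Finset.prod_const, Finset.card_univ, Fintype.card_fin, mul_pow, ← Real.exp_nat_mul]
          congr 2; ring
  have h5 : ∑ σ, Real.exp (l * D σ) ≤ 2 ^ n * C := by
    calc _ ≤ ∑ σ : Fin n → Bool, ∑ t ∈ T, ∏ i, Real.exp (l * (ermSg (σ i) * c t i)) :=
          Finset.sum_le_sum fun σ _ => h2 σ
      _ = ∑ t ∈ T, ∑ σ : Fin n → Bool, ∏ i, Real.exp (l * (ermSg (σ i) * c t i)) :=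
          Finset.sum_comm
      _ ≤ ∑ t ∈ T, 2 ^ n * Real.exp (l ^ 2 * n / 2) := Finset.sum_le_sum fun t _ => h3 t
      _ = T.card * (2 ^ n * Real.exp (l ^ 2 * n / 2)) := by simp
      _ ≤ N * (2 ^ n * Real.exp (l ^ 2 * n / 2)) := by gcongr
      _ = 2 ^ n * C := by rw [hC]; ring
  have h6 : l * ∑ σ, D σ ≤ 2 ^ n * Real.log C := by
    rw [Finset.mul_sum]
    calc _ ≤ ∑ σ, (Real.log C - 1 + Real.exp (l * D σ) / C) := Finset.sum_le_sum fun σ _ => h1 σ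
      _ = 2 ^ n * (Real.log C - 1) + (∑ σ, Real.exp (l * D σ)) / C := by
          rw [Finset.sum_add_distrib, Finset.sum_div]; simp; ring
      _ ≤ 2 ^ n * (Real.log C - 1) + (2 ^ n * C) / C := by gcongr
      _ = _ := by field_simp; ring
  rw [← hlogC, ← mul_div_assoc, le_div_iff₀ hl]
  linarith

lemma erm_shatter_le {X : Type*} {K n : ℕ} (F : Set (X → Fin K)) (xs : Fin n → X) :
    Nat.card {v : Fin n → Fin K // ∃ f ∈ F, ∀ i, f (xs i) = v i} ≤ shatterCoeff F n := by
  apply le_csSup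
  · refine ⟨Nat.card (Fin n → Fin K), ?_⟩
    rintro m ⟨ys, rfl⟩
    exact Nat.card_le_card_of_injective _ Subtype.val_injective
  · exact ⟨xs, rfl⟩

lemma erm_term_abs {X : Type*} {K : ℕ} (f : X → Fin K) (b : Bool)
    (p : (X × Fin K) × (X × Fin K)) :
    |ermSg b * (ermLoss f p.2 - ermLoss f p.1)| ≤ 1 := by
  unfold ermSg ermLoss
  split_ifs <;> norm_num

lemma erm_sum_abs {X : Type*} {K n : ℕ} (f : X → Fin K) (σ : Fin n → Bool)
    (w : Fin n → (X × Fin K) × (X × Fin K)) :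
    |∑ i, ermSg (σ i) * (ermLoss f (w i).2 - ermLoss f (w i).1)| ≤ n := by
  refine (Finset.abs_sum_le_sum_abs _ _).trans ?_
  refine (Finset.sum_le_sum fun i _ => erm_term_abs f (σ i) (w i)).trans ?_
  simp

lemma erm_bdd {X : Type*} {K n : ℕ} (F : Set (X → Fin K)) (σ : Fin n → Bool)
    (w : Fin n → (X × Fin K) × (X × Fin K)) :
    BddAbove (Set.range fun f : F =>
      ∑ i, ermSg (σ i) * (ermLoss f.1 (w i).2 - ermLoss f.1 (w i).1)) := by
  refine ⟨n, ?_⟩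
  rintro _ ⟨f, rfl⟩
  exact (abs_le.1 (erm_sum_abs f.1 σ w)).2

lemma ermD_abs {X : Type*} {K n : ℕ} (F : Set (X → Fin K)) (hF : F.Nonempty) (σ : Fin n → Bool)
    (w : Fin n → (X × Fin K) × (X × Fin K)) : |ermD F σ w| ≤ n := by
  obtain ⟨f, hf⟩ := hF
  have : Nonempty F := ⟨⟨f, hf⟩⟩
  rw [abs_le]
  constructor
  · exact (abs_le.1 (erm_sum_abs f σ w)).1.trans (le_ciSup (erm_bdd F σ w) ⟨f, hf⟩)
  · exact ciSup_le fun f => (abs_le.1 (erm_sum_abs f.1 σ w)).2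

lemma ermD_sum_le {X : Type*} {K n : ℕ} (F : Set (X → Fin K)) (hF : F.Nonempty)
    (w : Fin n → (X × Fin K) × (X × Fin K)) (N : ℝ) (hN : 0 < N)
    (hSN : (shatterCoeff F n : ℝ) ≤ N) (l : ℝ) (hl : 0 < l) :
    ∑ σ, ermD F σ w ≤ 2 ^ n * ((Real.log (N ^ 2) + l ^ 2 * n / 2) / l) := by
  classical
  have : Nonempty F := hF.to_subtype
  let V : (Fin n → X) → Finset (Fin n → Fin K) := fun xs =>
    Finset.univ.filter fun v => ∃ f ∈ F, ∀ i, f (xs i) = v i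
  have hV : ∀ xs, ((V xs).card : ℝ) ≤ N := by
    intro xs
    refine le_trans ?_ hSN
    have h := erm_shatter_le F xs
    rw [Nat.card_eq_fintype_card, Fintype.card_subtype] at h
    exact_mod_cast h
  let T := V (fun i => (w i).1.1) ×ˢ V (fun i => (w i).2.1)
  let c : (Fin n → Fin K) × (Fin n → Fin K) → Fin n → ℝ := fun t i =>
    (if t.2 i ≠ (w i).2.2 then 1 else 0) - (if t.1 i ≠ (w i).1.2 then 1 else 0)
  refine erm_massart T c ?_ _ ?_ _ (by positivity) ?_ l hl
  · intro t i
    simp only [c]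
    split_ifs <;> norm_num
  · intro σ
    have key : ∀ f : F, ∃ t ∈ T, ∑ i, ermSg (σ i) * (ermLoss f.1 (w i).2 - ermLoss f.1 (w i).1)
        = ∑ i, ermSg (σ i) * c t i := by
      intro f
      refine ⟨(fun i => f.1 (w i).1.1, fun i => f.1 (w i).2.1), ?_, ?_⟩
      · simp only [T, V, Finset.mem_product, Finset.mem_filter, Finset.mem_univ, true_and]
        exact ⟨⟨f.1, f.2, fun i => rfl⟩, ⟨f.1, f.2, fun i => rfl⟩⟩
      · rfl
    have hfin : (Set.range fun f : F =>
        ∑ i, ermSg (σ i) * (ermLoss f.1 (w i).2 - ermLoss f.1 (w i).1)).Finite := by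
      refine (T.image fun t => ∑ i, ermSg (σ i) * c t i).finite_toSet.subset ?_
      rintro _ ⟨f, rfl⟩
      obtain ⟨t, ht, h⟩ := key f
      simp only [Finset.coe_image, Set.mem_image]
      exact ⟨t, ht, h.symm⟩
    obtain ⟨f, hf⟩ := (Set.range_nonempty _).csSup_mem hfin
    obtain ⟨t, ht, h⟩ := key f
    exact ⟨t, ht, by rw [← h]; exact hf.symm⟩
  · rw [Finset.card_product, Nat.cast_mul, sq]
    exact mul_le_mul (hV _) (hV _) (by positivity) hN.le

lemma ermLoss_measurable {X : Type*} [MeasurableSpace X] {K : ℕ} {f : X → Fin K}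
    (hf : Measurable f) : Measurable (ermLoss f) := by
  unfold ermLoss
  refine Measurable.ite ?_ measurable_const measurable_const
  exact (measurableSet_eq_fun (hf.comp measurable_fst) measurable_snd).compl

lemma ermLoss_integral {X : Type*} [MeasurableSpace X] {K : ℕ} {f : X → Fin K}
    (hf : Measurable f) (P : Measure (X × Fin K)) :
    ∫ p, ermLoss f p ∂P = (P {p : X × Fin K | f p.1 ≠ p.2}).toReal := by
  have hs : MeasurableSet {p : X × Fin K | f p.1 ≠ p.2} :=
    (measurableSet_eq_fun (hf.comp measurable_fst) measurable_snd).compl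
  have : ermLoss f = Set.indicator {p : X × Fin K | f p.1 ≠ p.2} 1 := by
    ext p; simp [ermLoss, Set.indicator]
  rw [this, integral_indicator_one hs]; rfl

lemma ermD_measurable {X : Type*} [MeasurableSpace X] {K n : ℕ} (F : Set (X → Fin K))
    (hFc : F.Countable) (hFm : ∀ f ∈ F, Measurable f) (σ : Fin n → Bool) :
    Measurable (ermD F σ) := by
  have : Countable F := hFc.to_subtype
  unfold ermD
  refine Measurable.iSup fun f => ?_
  have hm := ermLoss_measurable (hFm f.1 f.2)
  refine Finset.measurable_sum _ fun i _ => ?_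
  refine measurable_const.mul (Measurable.sub ?_ ?_)
  · exact hm.comp (measurable_snd.comp (measurable_pi_apply i))
  · exact hm.comp (measurable_fst.comp (measurable_pi_apply i))

lemma ermD_symm {X : Type*} [MeasurableSpace X] {K n : ℕ} (F : Set (X → Fin K))
    (hFc : F.Countable) (hFm : ∀ f ∈ F, Measurable f)
    (P : Measure (X × Fin K)) [IsProbabilityMeasure P] (σ : Fin n → Bool) :
    ∫ w, ermD F σ w ∂(Measure.pi fun _ : Fin n => P.prod P)
      = ∫ w, ermD F (fun _ => true) w ∂(Measure.pi fun _ : Fin n => P.prod P) := by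
  have hmp : MeasurePreserving
      (fun (w : Fin n → (X × Fin K) × (X × Fin K)) i =>
        (fun p => if σ i then p else Prod.swap p : (X × Fin K) × (X × Fin K) → _) (w i))
      (Measure.pi fun _ : Fin n => P.prod P) (Measure.pi fun _ : Fin n => P.prod P) := by
    refine measurePreserving_pi (fun _ : Fin n => P.prod P) (fun _ : Fin n => P.prod P)
      (f := fun i p => if σ i then p else Prod.swap p) fun i => ?_
    cases σ i
    · simpa using (Measure.measurePreserving_swap (μ := P) (ν := P))
    · simp only [if_true]; exact MeasurePreserving.id (P.prod P)
  conv_rhs => rw [← hmp.map_eq]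
  rw [integral_map hmp.measurable.aemeasurable
    (ermD_measurable F hFc hFm _).aestronglyMeasurable]
  congr 1
  ext w
  unfold ermD
  congr 1
  ext f
  refine Finset.sum_congr rfl fun i _ => ?_
  cases h : σ i <;> simp [ermSg, h]

lemma ermD_integral_le {X : Type*} [MeasurableSpace X] {K n : ℕ} (F : Set (X → Fin K))
    (hF : F.Nonempty) (hFc : F.Countable) (hFm : ∀ f ∈ F, Measurable f)
    (P : Measure (X × Fin K)) [IsProbabilityMeasure P] (N : ℝ) (hN : 0 < N)
    (hSN : (shatterCoeff F n : ℝ) ≤ N) (l : ℝ) (hl : 0 < l) :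
    ∫ w, ermD F (fun _ => true) w ∂(Measure.pi fun _ : Fin n => P.prod P)
      ≤ (Real.log (N ^ 2) + l ^ 2 * n / 2) / l := by
  have hint : ∀ σ : Fin n → Bool,
      Integrable (ermD F σ) (Measure.pi fun _ : Fin n => P.prod P) := fun σ =>
    Integrable.of_bound (ermD_measurable F hFc hFm σ).aestronglyMeasurable (n : ℝ)
      (ae_of_all _ fun w => ermD_abs F hF σ w)
  have h1 : ∑ σ : Fin n → Bool, ∫ w, ermD F σ w ∂(Measure.pi fun _ : Fin n => P.prod P)
      ≤ 2 ^ n * ((Real.log (N ^ 2) + l ^ 2 * n / 2) / l) := by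
    rw [← integral_finsetSum _ fun σ _ => hint σ]
    refine (integral_mono (integrable_finsetSum _ fun σ _ => hint σ) (integrable_const _)
      (fun w => ermD_sum_le F hF w N hN hSN l hl)).trans ?_
    simp
  simp_rw [ermD_symm F hFc hFm P] at h1
  rw [Finset.sum_const, nsmul_eq_mul] at h1
  have h2 : ((Finset.univ : Finset (Fin n → Bool)).card : ℝ) = 2 ^ n := by simp
  rw [h2] at h1
  exact le_of_mul_le_mul_left h1 (by positivity)

/-- Expected excess risk of empirical risk minimization, bounded via the multiclass
shatter coefficient: `E[R(f̂) - R(f°)] ≤ 16 √(log(8e S(F, n)) / (2n))`. -/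
theorem erm_expected_excess_risk
    {X : Type*} [MeasurableSpace X] (K n : ℕ) (hK : 2 ≤ K) (hn : 1 ≤ n)
    (F : Set (X → Fin K)) (hFc : F.Countable) (hFm : ∀ f ∈ F, Measurable f)
    (P : Measure (X × Fin K)) [IsProbabilityMeasure P]
    (f0 : X → Fin K) (hf0 : f0 ∈ F)
    (hf0opt : ∀ f ∈ F,
      (P {p : X × Fin K | f0 p.1 ≠ p.2}).toReal ≤ (P {p : X × Fin K | f p.1 ≠ p.2}).toReal)
    (fhat : (Fin n → X × Fin K) → X → Fin K)
    (hmem : ∀ z, fhat z ∈ F)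
    (hERM : ∀ z, ∀ f ∈ F,
      (Finset.univ.filter fun i => fhat z (z i).1 ≠ (z i).2).card ≤
        (Finset.univ.filter fun i => f (z i).1 ≠ (z i).2).card)
    (hfhat : Measurable fun p : (Fin n → X × Fin K) × X => fhat p.1 p.2) :
    (∫ z, ((P {p : X × Fin K | fhat z p.1 ≠ p.2}).toReal -
            (P {p : X × Fin K | f0 p.1 ≠ p.2}).toReal)
        ∂(Measure.pi fun _ : Fin n => P)) ≤
      16 * Real.sqrt (Real.log (8 * Real.exp 1 * (shatterCoeff F n : ℝ)) / (2 * n)) := by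
  classical
  have hF : F.Nonempty := ⟨f0, hf0⟩
  have hn' : (0 : ℝ) < n := by exact_mod_cast hn
  set μ := (Measure.pi fun _ : Fin n => P) with hμ
  have hfm : ∀ z, Measurable (fhat z) := fun z => hFm _ (hmem z)
  -- ghost sample identity
  have hghost : ∀ f : X → Fin K, Measurable f → ∫ z, ∑ i, ermLoss f (z i) ∂μ
      = n * (P {p : X × Fin K | f p.1 ≠ p.2}).toReal := by
    intro f hf
    have hm := ermLoss_measurable hf
    rw [integral_finsetSum]
    · have : ∀ i : Fin n, ∫ z, ermLoss f (z i) ∂μ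
          = (P {p : X × Fin K | f p.1 ≠ p.2}).toReal := by
        intro i
        rw [hμ, integral_comp_eval (μ := fun _ : Fin n => P) hm.aestronglyMeasurable,
          ermLoss_integral hf]
      simp [this]
    · intro i _
      refine Integrable.of_bound (hm.comp (measurable_pi_apply i)).aestronglyMeasurable (1 : ℝ)
        (ae_of_all _ fun z => ?_)
      rw [Real.norm_eq_abs, abs_of_nonneg (ermLoss_nonneg _ _)]
      exact ermLoss_le _ _
  have hbd : ∀ (f : X → Fin K) (z : Fin n → X × Fin K), ‖∑ i, ermLoss f (z i)‖ ≤ n := by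
    intro f z
    rw [Real.norm_eq_abs, abs_of_nonneg (Finset.sum_nonneg fun i _ => ermLoss_nonneg _ _)]
    refine (Finset.sum_le_sum fun i _ => ermLoss_le f (z i)).trans ?_
    simp
  have ha_meas : Measurable fun q : (Fin n → X × Fin K) × (Fin n → X × Fin K) =>
      ∑ i, ermLoss (fhat q.1) (q.2 i) := by
    refine Finset.measurable_sum _ fun i _ => ?_
    unfold ermLoss
    refine Measurable.ite ?_ measurable_const measurable_const
    refine (measurableSet_eq_fun ?_ ?_).compl
    · exact hfhat.comp (measurable_fst.prodMk
        (measurable_fst.comp ((measurable_pi_apply i).comp measurable_snd)))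
    · exact measurable_snd.comp ((measurable_pi_apply i).comp measurable_snd)
  have ha_int : Integrable (fun q : (Fin n → X × Fin K) × (Fin n → X × Fin K) =>
      ∑ i, ermLoss (fhat q.1) (q.2 i)) (μ.prod μ) :=
    Integrable.of_bound ha_meas.aestronglyMeasurable (n : ℝ) (ae_of_all _ fun q => hbd _ _)
  have he_meas : Measurable fun z : Fin n → X × Fin K => ∑ i, ermLoss (fhat z) (z i) :=
    ha_meas.comp (measurable_id.prodMk measurable_id)
  have he_int : Integrable (fun z => ∑ i, ermLoss (fhat z) (z i)) μ :=
    Integrable.of_bound he_meas.aestronglyMeasurable (n : ℝ) (ae_of_all _ fun q => hbd _ _)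
  have he_int2 : Integrable (fun q : (Fin n → X × Fin K) × (Fin n → X × Fin K) =>
      ∑ i, ermLoss (fhat q.1) (q.1 i)) (μ.prod μ) :=
    Integrable.of_bound (he_meas.comp measurable_fst).aestronglyMeasurable (n : ℝ)
      (ae_of_all _ fun q => hbd _ _)
  have hh_int : Integrable
      (fun z => (n : ℝ) * (P {p : X × Fin K | fhat z p.1 ≠ p.2}).toReal) μ := by
    have := ha_int.integral_prod_left
    simpa only [hghost _ (hfm _)] using this
  have hh_int' : Integrable
      (fun z => (P {p : X × Fin K | fhat z p.1 ≠ p.2}).toReal) μ := by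
    have := hh_int.const_mul (n : ℝ)⁻¹
    simpa only [inv_mul_cancel_left₀ hn'.ne'] using this
  have ha_eq : ∫ q, ∑ i, ermLoss (fhat q.1) (q.2 i) ∂(μ.prod μ)
      = n * ∫ z, (P {p : X × Fin K | fhat z p.1 ≠ p.2}).toReal ∂μ := by
    rw [integral_prod _ ha_int, ← integral_const_mul]
    simp only [hghost _ (hfm _)]
  have he_eq : ∫ q : (Fin n → X × Fin K) × (Fin n → X × Fin K),
      ∑ i, ermLoss (fhat q.1) (q.1 i) ∂(μ.prod μ) = ∫ z, ∑ i, ermLoss (fhat z) (z i) ∂μ := by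
    rw [integral_fun_fst (fun z => ∑ i, ermLoss (fhat z) (z i))]
    simp
  have he_le : ∫ z, ∑ i, ermLoss (fhat z) (z i) ∂μ
      ≤ n * (P {p : X × Fin K | f0 p.1 ≠ p.2}).toReal := by
    rw [← hghost f0 (hFm _ hf0)]
    refine integral_mono he_int ?_ fun z => ?_
    · refine Integrable.of_bound (Finset.measurable_sum _ fun i _ =>
        (ermLoss_measurable (hFm _ hf0)).comp (measurable_pi_apply i)).aestronglyMeasurable
        (n : ℝ) (ae_of_all _ fun q => hbd _ _)
    · simp only [ermLoss_sum]
      exact_mod_cast hERM z f0 hf0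
  have hD_eq : ∫ q : (Fin n → X × Fin K) × (Fin n → X × Fin K),
      ermD F (fun _ => true) (fun i => (q.1 i, q.2 i)) ∂(μ.prod μ)
      = ∫ w, ermD F (fun _ => true) w ∂(Measure.pi fun _ : Fin n => P.prod P) := by
    have hmp := (measurePreserving_arrowProdEquivProdArrow (X × Fin K) (X × Fin K) (Fin n)
      (fun _ => P) (fun _ => P)).symm
    rw [← hmp.integral_comp']
    rfl
  have hDq_int : Integrable (fun q : (Fin n → X × Fin K) × (Fin n → X × Fin K) =>
      ermD F (fun _ => true) (fun i => (q.1 i, q.2 i))) (μ.prod μ) := by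
    refine Integrable.of_bound (Measurable.aestronglyMeasurable ?_) (n : ℝ)
      (ae_of_all _ fun q => ermD_abs F hF _ _)
    refine (ermD_measurable F hFc hFm _).comp ?_
    exact measurable_pi_lambda _ fun i =>
      ((measurable_pi_apply i).comp measurable_fst).prodMk
        ((measurable_pi_apply i).comp measurable_snd)
  have hmain : n * ∫ z, (P {p : X × Fin K | fhat z p.1 ≠ p.2}).toReal ∂μ
      - ∫ z, ∑ i, ermLoss (fhat z) (z i) ∂μ
      ≤ ∫ w, ermD F (fun _ => true) w ∂(Measure.pi fun _ : Fin n => P.prod P) := by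
    rw [← ha_eq, ← he_eq, ← hD_eq, ← integral_sub ha_int he_int2]
    refine integral_mono (ha_int.sub he_int2) hDq_int fun q => ?_
    have h := le_ciSup (erm_bdd F (fun _ => true) (fun i => (q.1 i, q.2 i)))
      ⟨fhat q.1, hmem q.1⟩
    refine le_trans (le_of_eq ?_) h
    simp [ermSg, Finset.sum_sub_distrib]
  -- numbers
  have hSpos : 1 ≤ shatterCoeff F n := by
    have : Nonempty X := by
      by_contra hX
      rw [not_nonempty_iff] at hX
      have h0 : P Set.univ = 0 := by
        rw [Set.univ_eq_empty_iff.2 inferInstance, measure_empty]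
      rw [measure_univ] at h0
      exact one_ne_zero h0
    let xs : Fin n → X := fun _ => Classical.arbitrary X
    refine le_trans ?_ (erm_shatter_le F xs)
    have : Nonempty {v : Fin n → Fin K // ∃ f ∈ F, ∀ i, f (xs i) = v i} :=
      ⟨⟨fun i => f0 (xs i), f0, hf0, fun i => rfl⟩⟩
    exact Nat.card_pos
  have hSR : (1 : ℝ) ≤ shatterCoeff F n := by exact_mod_cast hSpos
  set S : ℝ := (shatterCoeff F n : ℝ) with hSdef
  set L := Real.log (8 * Real.exp 1 * S) with hL
  have he2 : (1 : ℝ) ≤ Real.exp 1 := Real.one_le_exp (by norm_num)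
  have hlogS : Real.log S ≤ L := Real.log_le_log (by linarith) (by nlinarith)
  have hL1 : 1 ≤ L := by
    rw [hL, Real.le_log_iff_exp_le (by positivity)]
    nlinarith
  set s := Real.sqrt (L / (2 * n)) with hs
  have hspos : 0 < s := Real.sqrt_pos.2 (by positivity)
  have hs2 : s ^ 2 * (2 * n) = L := by
    rw [hs, Real.sq_sqrt (by positivity)]; field_simp
  have hb := ermD_integral_le F hF hFc hFm P S (by linarith) le_rfl s hspos
  have hb2 : (Real.log (S ^ 2) + s ^ 2 * n / 2) / s ≤ n * (16 * s) := by
    rw [div_le_iff₀ hspos, Real.log_pow]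
    push_cast
    nlinarith [sq_nonneg s]
  rw [integral_sub hh_int' (integrable_const _), integral_const]
  simp only [probReal_univ, one_smul]
  have hfin : (n : ℝ) * (∫ z, (P {p : X × Fin K | fhat z p.1 ≠ p.2}).toReal ∂μ
      - (P {p : X × Fin K | f0 p.1 ≠ p.2}).toReal) ≤ n * (16 * s) := by
    rw [mul_sub]; linarith
  exact le_of_mul_le_mul_left hfin hn'
end
end
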